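/- arXiv:1411.5244 — 3 statements merged into one kernel-verified Lean document; each statement's English description precedes it below -/
import Mathlib

section
/- Let k ≥ 2, let n ≥ 1 be an integer, let λ₁ ≤ … ≤ λ_{k-1} < λ_k be real numbers and C_k > 0. For t ∈ [0,t₀) let M(t) be a k×k real matrix whose entries satisfy m_{ij}(t) = g_{ij}(t²) for functions g_{ij} of class C^{n+1} on [0,t₀²), and assume, as t → 0⁺: m_{ii}(t) = λ_i + O(t²) for i = 1,…,k−1; m_{kk}(t) = λ_k − C_k·t^{2n+2} + o(t^{2n+2}); m_{ij}(t) = O(t²) for i ≠ j with i,j ≤ k−1; and m_{ij}(t) = O(t^{n+2}) for i ≠ j with k ∈ {i,j}. Then for all sufficiently small t > 0 the matrix M(t) has a real eigenvalue λ(t) satisfying λ(t) = λ_k − C_k·t^{2n+2} + o(t^{2n+2}) as t → 0⁺, and λ(t) is strictly greater than the real part of every other eigenvalue of M(t); in particular the greatest eigenvalue of M(t) equals λ_k − C_k·t^{2n+2} + o(t^{2n+2}). -/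
/-!
The last coordinate `κ` decouples from the others up to a coupling of size `β = O(t^{n+2})`.

Let `δ > 0` be such that `λ_i + 3δ ≤ λ_κ` for `i ≠ κ`. For small `t`, if `Re z ≥ λ_κ - δ`, the block
of `z - M(t)` obtained by deleting row and column `κ` is strictly diagonally dominant with margin
`δ`, so its inverse has sup-norm at most `1/δ` (`norm_le_of_dominant`). Hence an eigenvector for such
a `z` can be normalised to have `κ`-th coordinate `1` and its other coordinates are then at most
`β/δ` (`exists_normalized_eigenvector`). Reading row `κ` of the eigenvalue equation gives
`|z - m_κκ| ≤ k β²/δ = O(t^{2n+4})` (`eigenvalue_near_diag`), and subtracting the equations of two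
such eigenvalues shows that they coincide once `k β² < δ²` (`eigenvalue_unique`).

A real eigenvalue in `[λ_κ - δ, λ_κ + δ]` exists by the intermediate value theorem, as the
characteristic polynomial of `M(t)` tends pointwise to `∏ (s - λ_i)`, which has opposite signs at
the two endpoints. By uniqueness every other eigenvalue has real part below `λ_κ - δ`.
-/

open Filter Set Asymptotics Polynomial

section FixedMatrix

variable {ι : Type*} [Fintype ι] [DecidableEq ι]

/-- Sup-norm bound for the inverse of a block that is diagonally dominant with margin `δ`; the block
consists of the rows and columns of `z - N` other than `κ`. -/
lemma norm_le_of_dominant (N : Matrix ι ι ℂ) (κ : ι) (δ R : ℝ) (hδ : 0 < δ) (z : ℂ)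
    (hdom : ∀ i, i ≠ κ →
      δ ≤ ‖z - N i i‖ - ∑ j ∈ (Finset.univ.erase κ).erase i, ‖N i j‖)
    (u : ι → ℂ)
    (hu : ∀ i, i ≠ κ →
      ‖(z - N i i) * u i - ∑ j ∈ (Finset.univ.erase κ).erase i, N i j * u j‖ ≤ R) :
    ∀ i, i ≠ κ → δ * ‖u i‖ ≤ R := by
  intro i₀ hi₀
  obtain ⟨i, hi, hmax⟩ := Finset.exists_max_image (Finset.univ.erase κ) (fun i => ‖u i‖)
    ⟨i₀, by simpa using hi₀⟩
  have hiκ : i ≠ κ := by simpa using hi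
  have h1 : δ * ‖u i₀‖ ≤ δ * ‖u i‖ :=
    mul_le_mul_of_nonneg_left (hmax i₀ (by simpa using hi₀)) hδ.le
  have h2 := mul_le_mul_of_nonneg_right (hdom i hiκ) (norm_nonneg (u i))
  have h3 : ‖∑ j ∈ (Finset.univ.erase κ).erase i, N i j * u j‖ ≤
      (∑ j ∈ (Finset.univ.erase κ).erase i, ‖N i j‖) * ‖u i‖ := by
    rw [Finset.sum_mul]
    refine norm_sum_le_of_le _ fun j hj => ?_
    rw [norm_mul]
    exact mul_le_mul_of_nonneg_left (hmax j (Finset.mem_of_mem_erase hj)) (norm_nonneg _)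
  have h4 := norm_sub_norm_le ((z - N i i) * u i)
    (∑ j ∈ (Finset.univ.erase κ).erase i, N i j * u j)
  rw [norm_mul] at h4
  have h5 := hu i hiκ
  nlinarith

/-- An eigenvector for `z` cannot vanish at `κ`, and after normalising that coordinate to `1` the
other coordinates are controlled by the coupling `β` with column `κ`. -/
lemma exists_normalized_eigenvector (N : Matrix ι ι ℂ) (κ : ι) (δ β : ℝ) (hδ : 0 < δ) (z : ℂ)
    (hdom : ∀ i, i ≠ κ →
      δ ≤ ‖z - N i i‖ - ∑ j ∈ (Finset.univ.erase κ).erase i, ‖N i j‖)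
    (hcol : ∀ i, i ≠ κ → ‖N i κ‖ ≤ β)
    (hz : N.charpoly.eval z = 0) :
    ∃ v : ι → ℂ,
      (∀ i, i ≠ κ → (z - N i i) * v i -
        ∑ j ∈ (Finset.univ.erase κ).erase i, N i j * v j = N i κ) ∧
      z - N κ κ = ∑ j ∈ Finset.univ.erase κ, N κ j * v j ∧
      ∀ i, i ≠ κ → δ * ‖v i‖ ≤ β := by
  rw [Matrix.eval_charpoly] at hz
  obtain ⟨v, hv0, hv⟩ := Matrix.exists_mulVec_eq_zero_iff.mpr hz
  have hrow : ∀ i, z * v i = ∑ j, N i j * v j := by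
    intro i
    have := congrFun hv i
    rw [Matrix.sub_mulVec] at this
    simp only [Pi.sub_apply, Pi.zero_apply, Matrix.scalar_apply, Matrix.mulVec_diagonal] at this
    simpa [Matrix.mulVec, dotProduct] using sub_eq_zero.mp this
  have hκ : ∀ i, z * v i = N i κ * v κ + ∑ j ∈ Finset.univ.erase κ, N i j * v j := by
    intro i
    rw [hrow i, Finset.add_sum_erase _ (fun j => N i j * v j) (Finset.mem_univ κ)]
  have hi : ∀ i, i ≠ κ → (z - N i i) * v i -
      ∑ j ∈ (Finset.univ.erase κ).erase i, N i j * v j = N i κ * v κ := by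
    intro i hiκ
    have h := hκ i
    rw [← Finset.add_sum_erase (Finset.univ.erase κ) (fun j => N i j * v j)
      (by simpa using hiκ : i ∈ Finset.univ.erase κ)] at h
    linear_combination h
  have hvκ : v κ ≠ 0 := by
    intro h0
    apply hv0
    have := norm_le_of_dominant N κ δ 0 hδ z hdom v (fun i hiκ => by rw [hi i hiκ, h0]; simp)
    funext i
    by_cases hiκ : i = κ
    · rw [hiκ, h0]; rfl
    · have h1 := this i hiκ
      have h2 : ‖v i‖ ≤ 0 := by
        by_contra! h3
        nlinarith
      simpa using h2
  have hi' : ∀ i, i ≠ κ → (z - N i i) * (v i / v κ) -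
      ∑ j ∈ (Finset.univ.erase κ).erase i, N i j * (v j / v κ) = N i κ := by
    intro i hiκ
    have h := hi i hiκ
    simp only [← mul_div_assoc]
    rw [← Finset.sum_div, ← sub_div, h, mul_div_cancel_right₀ _ hvκ]
  refine ⟨fun i => v i / v κ, hi', ?_, ?_⟩
  · have h := hκ κ
    simp only [← mul_div_assoc]
    rw [← Finset.sum_div, eq_div_iff hvκ]
    linear_combination h
  · exact norm_le_of_dominant N κ δ β hδ z hdom _
      (fun i hiκ => by rw [hi' i hiκ]; exact hcol i hiκ)

lemma norm_sum_row_le (N : Matrix ι ι ℂ) (κ : ι) (β b : ℝ) (hb : 0 ≤ b) (hβ : 0 ≤ β)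
    (hrow : ∀ i, i ≠ κ → ‖N κ i‖ ≤ β) (u : ι → ℂ) (hu : ∀ i, i ≠ κ → ‖u i‖ ≤ b) :
    ‖∑ j ∈ Finset.univ.erase κ, N κ j * u j‖ ≤ Fintype.card ι * (β * b) := by
  calc ‖∑ j ∈ Finset.univ.erase κ, N κ j * u j‖
      ≤ ∑ j ∈ Finset.univ.erase κ, β * b := by
        refine norm_sum_le_of_le _ fun j hj => ?_
        have hj : j ≠ κ := by simpa using hj
        rw [norm_mul]
        exact mul_le_mul (hrow j hj) (hu j hj) (norm_nonneg _) hβ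
    _ ≤ ∑ j : ι, β * b :=
        Finset.sum_le_sum_of_subset_of_nonneg (Finset.subset_univ _)
          fun _ _ _ => mul_nonneg hβ hb
    _ = _ := by simp

lemma eigenvalue_near_diag (N : Matrix ι ι ℂ) (κ : ι) (δ β : ℝ) (hδ : 0 < δ) (hβ : 0 ≤ β) (z : ℂ)
    (hdom : ∀ i, i ≠ κ →
      δ ≤ ‖z - N i i‖ - ∑ j ∈ (Finset.univ.erase κ).erase i, ‖N i j‖)
    (hcol : ∀ i, i ≠ κ → ‖N i κ‖ ≤ β) (hrow : ∀ i, i ≠ κ → ‖N κ i‖ ≤ β)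
    (hz : N.charpoly.eval z = 0) :
    ‖z - N κ κ‖ ≤ Fintype.card ι * (β * (β / δ)) := by
  obtain ⟨v, -, h2, h3⟩ := exists_normalized_eigenvector N κ δ β hδ z hdom hcol hz
  rw [h2]
  exact norm_sum_row_le N κ β _ (by positivity) hβ hrow v
    fun i hi => by rw [le_div_iff₀ hδ, mul_comm]; exact h3 i hi

lemma eigenvalue_unique (N : Matrix ι ι ℂ) (κ : ι) (δ β : ℝ) (hδ : 0 < δ) (hβ : 0 ≤ β) (z w : ℂ)
    (hdomz : ∀ i, i ≠ κ →
      δ ≤ ‖z - N i i‖ - ∑ j ∈ (Finset.univ.erase κ).erase i, ‖N i j‖)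
    (hdomw : ∀ i, i ≠ κ →
      δ ≤ ‖w - N i i‖ - ∑ j ∈ (Finset.univ.erase κ).erase i, ‖N i j‖)
    (hcol : ∀ i, i ≠ κ → ‖N i κ‖ ≤ β) (hrow : ∀ i, i ≠ κ → ‖N κ i‖ ≤ β)
    (hsmall : Fintype.card ι * (β * (β / δ / δ)) < 1)
    (hz : N.charpoly.eval z = 0) (hw : N.charpoly.eval w = 0) : z = w := by
  obtain ⟨x, hx1, hx2, -⟩ := exists_normalized_eigenvector N κ δ β hδ z hdomz hcol hz
  obtain ⟨y, hy1, hy2, hy3⟩ := exists_normalized_eigenvector N κ δ β hδ w hdomw hcol hw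
  -- The difference of the eigenvectors solves the block system with right-hand side `(w - z) y`.
  have hu := norm_le_of_dominant N κ δ (‖z - w‖ * (β / δ)) hδ z hdomz (x - y) (by
    intro i hi
    have : (z - N i i) * (x - y) i - ∑ j ∈ (Finset.univ.erase κ).erase i, N i j * (x - y) j
        = -((z - w) * y i) := by
      simp only [Pi.sub_apply, mul_sub, Finset.sum_sub_distrib]
      linear_combination hx1 i hi - hy1 i hi
    rw [this, norm_neg, norm_mul]
    refine mul_le_mul_of_nonneg_left ?_ (norm_nonneg _)
    rw [le_div_iff₀ hδ, mul_comm]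
    exact hy3 i hi)
  have hdiff : z - w = ∑ j ∈ Finset.univ.erase κ, N κ j * (x - y) j := by
    simp only [Pi.sub_apply, mul_sub, Finset.sum_sub_distrib]
    linear_combination hx2 - hy2
  have hle := norm_sum_row_le N κ β (‖z - w‖ * (β / δ) / δ) (by positivity) hβ hrow (x - y)
    fun i hi => by rw [le_div_iff₀ hδ, mul_comm]; exact hu i hi
  rw [← hdiff] at hle
  by_contra hne
  have hpos : 0 < ‖z - w‖ := norm_pos_iff.mpr (sub_ne_zero.mpr hne)
  have : (Fintype.card ι : ℝ) * (β * (‖z - w‖ * (β / δ) / δ)) =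
      (Fintype.card ι * (β * (β / δ / δ))) * ‖z - w‖ := by ring
  rw [this] at hle
  nlinarith

/-- A real matrix dominant at the real point `c` is dominant at every `z` with `c ≤ Re z`. -/
lemma dominant_of_re (A : Matrix ι ι ℝ) (κ : ι) (δ c : ℝ)
    (hA : ∀ i, i ≠ κ → δ ≤ c - A i i - ∑ j ∈ (Finset.univ.erase κ).erase i, ‖A i j‖)
    (z : ℂ) (hz : c ≤ z.re) (i : ι) (hi : i ≠ κ) :
    δ ≤ ‖z - A.map (algebraMap ℝ ℂ) i i‖ -
      ∑ j ∈ (Finset.univ.erase κ).erase i, ‖A.map (algebraMap ℝ ℂ) i j‖ := by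
  have h1 : z.re - A i i ≤ ‖z - (A i i : ℂ)‖ := by
    simpa using Complex.re_le_norm (z - (A i i : ℂ))
  have h2 := hA i hi
  simp only [Matrix.map_apply, Complex.coe_algebraMap, Complex.norm_real]
  linarith

end FixedMatrix

/-- Perturbation of the greatest eigenvalue of a family of `k×k` real matrices.
Let `λ₁ ≤ … ≤ λ_{k−1} < λ_k`, `C_k > 0`, `n ≥ 1`, and let `M(t)` have entries which
are `C^{n+1}` functions of `t²` with, as `t → 0⁺`: `m_ii = λ_i + O(t²)` for `i < k`,
`m_kk = λ_k − C_k t^{2n+2} + o(t^{2n+2})`, `m_ij = O(t²)` off-diagonal away from the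
last row/column, and `m_ij = O(t^{n+2})` off-diagonal on the last row/column.
Then for small `t > 0` the matrix `M(t)` has a real eigenvalue
`λ(t) = λ_k − C_k t^{2n+2} + o(t^{2n+2})`, strictly greater than the real part of every
other (complex) eigenvalue of `M(t)`. -/
theorem greatest_eigenvalue_perturbation
    (k n : ℕ) (hk : 2 ≤ k) (hn : 1 ≤ n)
    (lam : Fin k → ℝ)
    (hmono : ∀ i j : Fin k, i ≤ j → lam i ≤ lam j)
    (hstrict : ∀ i : Fin k, i ≠ ⟨k - 1, by omega⟩ → lam i < lam ⟨k - 1, by omega⟩)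
    (Ck : ℝ) (hCk : 0 < Ck)
    (t₀ : ℝ) (ht₀ : 0 < t₀)
    (M : ℝ → Matrix (Fin k) (Fin k) ℝ)
    (g : Fin k → Fin k → ℝ → ℝ)
    (hg : ∀ i j : Fin k, ContDiffOn ℝ (n + 1) (g i j) (Set.Ico 0 (t₀ ^ 2)))
    (hMg : ∀ i j : Fin k, ∀ t ∈ Set.Ico 0 t₀, M t i j = g i j (t ^ 2))
    (hdiag : ∀ i : Fin k, i ≠ ⟨k - 1, by omega⟩ →
      (fun t : ℝ => M t i i - lam i) =O[nhdsWithin 0 (Set.Ioi 0)] fun t => t ^ 2)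
    (hlastdiag : (fun t : ℝ => M t ⟨k - 1, by omega⟩ ⟨k - 1, by omega⟩ -
        (lam ⟨k - 1, by omega⟩ - Ck * t ^ (2 * n + 2)))
      =o[nhdsWithin 0 (Set.Ioi 0)] fun t => t ^ (2 * n + 2))
    (hoff : ∀ i j : Fin k, i ≠ j → i ≠ ⟨k - 1, by omega⟩ → j ≠ ⟨k - 1, by omega⟩ →
      (fun t : ℝ => M t i j) =O[nhdsWithin 0 (Set.Ioi 0)] fun t => t ^ 2)
    (hoffk : ∀ i j : Fin k, i ≠ j →
      (i = ⟨k - 1, by omega⟩ ∨ j = ⟨k - 1, by omega⟩) →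
      (fun t : ℝ => M t i j) =O[nhdsWithin 0 (Set.Ioi 0)] fun t => t ^ (n + 2)) :
    ∃ lamf : ℝ → ℝ,
      (∀ᶠ t in nhdsWithin 0 (Set.Ioi (0:ℝ)),
        (aeval (lamf t : ℂ)) (Matrix.charpoly (M t)) = 0 ∧
        ∀ z : ℂ, (aeval z) (Matrix.charpoly (M t)) = 0 → z ≠ (lamf t : ℂ) →
          z.re < lamf t) ∧
      (fun t : ℝ => lamf t - (lam ⟨k - 1, by omega⟩ - Ck * t ^ (2 * n + 2)))
        =o[nhdsWithin 0 (Set.Ioi 0)] fun t => t ^ (2 * n + 2) := by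
  classical
  set κ : Fin k := ⟨k - 1, by omega⟩ with hκdef
  set l := nhdsWithin (0 : ℝ) (Set.Ioi 0) with hl
  have hpow : ∀ m : ℕ, m ≠ 0 → Tendsto (fun t : ℝ => t ^ m) l (nhds 0) := by
    intro m hm
    have : Tendsto (fun t : ℝ => t ^ m) (nhds 0) (nhds (0 ^ m)) := (continuous_pow m).tendsto 0
    rw [zero_pow hm] at this
    exact this.mono_left nhdsWithin_le_nhds
  -- Entrywise, `M t` tends to the diagonal matrix of the `lam i`.
  have hlim_off : ∀ i j, i ≠ j → Tendsto (fun t => M t i j) l (nhds 0) := by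
    intro i j hij
    by_cases h : i = κ ∨ j = κ
    · exact (hoffk i j hij h).trans_tendsto (hpow _ (by omega))
    · rw [not_or] at h
      exact (hoff i j hij h.1 h.2).trans_tendsto (hpow _ (by omega))
  have hlim_diag : ∀ i, Tendsto (fun t => M t i i) l (nhds (lam i)) := by
    intro i
    by_cases h : i = κ
    · subst h
      have h1 := hlastdiag.isBigO.trans_tendsto (hpow _ (by omega))
      have h2 := (h1.add_const (lam κ)).sub ((hpow (2 * n + 2) (by omega)).const_mul Ck)
      simp only [zero_add, mul_zero, sub_zero] at h2
      refine h2.congr fun t => ?_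
      ring
    · have h1 := ((hdiag i h).trans_tendsto (hpow 2 (by omega))).add_const (lam i)
      simpa using h1
  have hlim : Tendsto M l (nhds (Matrix.diagonal lam)) := by
    refine tendsto_pi_nhds.mpr fun i => tendsto_pi_nhds.mpr fun j => ?_
    by_cases hij : i = j
    · subst hij
      simpa using hlim_diag i
    · rw [Matrix.diagonal_apply_ne _ hij]
      exact hlim_off i j hij
  obtain ⟨δ, hδgap, hδ⟩ : ∃ δ : ℝ, (∀ i, i ≠ κ → lam i + 3 * δ < lam κ) ∧ 0 < δ := by
    have h1 : ∀ᶠ δ in nhdsWithin (0 : ℝ) (Set.Ioi 0), ∀ i, i ≠ κ → lam i + 3 * δ < lam κ := by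
      refine eventually_all.mpr fun i => ?_
      by_cases hi : i = κ
      · exact Eventually.of_forall fun _ h => absurd hi h
      · have hc : Tendsto (fun δ : ℝ => lam i + 3 * δ) (nhds 0) (nhds (lam i + 3 * 0)) :=
          (by fun_prop : Continuous fun δ : ℝ => lam i + 3 * δ).tendsto 0
        have hlt : lam i + 3 * 0 < lam κ := by simpa using hstrict i hi
        exact ((hc.mono_left nhdsWithin_le_nhds).eventually_lt_const hlt).mono fun _ h _ => h
    exact (h1.and self_mem_nhdsWithin).exists
  have hdom : ∀ᶠ t in l, ∀ i, i ≠ κ →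
      δ ≤ (lam κ - δ) - M t i i - ∑ j ∈ (Finset.univ.erase κ).erase i, ‖M t i j‖ := by
    refine eventually_all.mpr fun i => ?_
    by_cases hi : i = κ
    · exact Eventually.of_forall fun _ h => absurd hi h
    · have hs : Tendsto (fun t => ∑ j ∈ (Finset.univ.erase κ).erase i, ‖M t i j‖) l
          (nhds (∑ j ∈ (Finset.univ.erase κ).erase i, (0 : ℝ))) := by
        refine tendsto_finsetSum _ fun j hj => ?_
        simpa using (hlim_off i j (Finset.ne_of_mem_erase hj).symm).norm
      have hT := ((hlim_diag i).const_sub (lam κ - δ)).sub hs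
      have hlt : δ < (lam κ - δ) - lam i - ∑ j ∈ (Finset.univ.erase κ).erase i, (0 : ℝ) := by
        have := hδgap i hi
        simp only [Finset.sum_const_zero]
        linarith
      exact (hT.eventually_const_lt hlt).mono fun _ h _ => h.le
  -- Existence of a real root in `[lam κ - δ, lam κ + δ]`.
  have hcp : ∀ s : ℝ, Tendsto (fun t => (M t).charpoly.eval s) l (nhds (∏ i, (s - lam i))) := by
    intro s
    have hc : Continuous fun A : Matrix (Fin k) (Fin k) ℝ => (Matrix.scalar (Fin k) s - A).det :=
      (continuous_const.sub continuous_id).matrix_det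
    have h := (hc.tendsto (Matrix.diagonal lam)).comp hlim
    rw [Matrix.scalar_apply, Matrix.diagonal_sub, Matrix.det_diagonal] at h
    simpa only [Matrix.eval_charpoly, Matrix.scalar_apply, Function.comp_def] using h
  have hprod : ∀ s : ℝ, lam κ - δ ≤ s → 0 < ∏ i ∈ Finset.univ.erase κ, (s - lam i) := by
    intro s hs
    refine Finset.prod_pos fun i hi => ?_
    have := hδgap i (Finset.ne_of_mem_erase hi)
    linarith
  have hneg : ∏ i, (lam κ - δ - lam i) < 0 := by
    rw [← Finset.mul_prod_erase _ _ (Finset.mem_univ κ)]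
    exact mul_neg_of_neg_of_pos (by linarith) (hprod _ le_rfl)
  have hpos : 0 < ∏ i, (lam κ + δ - lam i) := by
    rw [← Finset.mul_prod_erase _ _ (Finset.mem_univ κ)]
    exact mul_pos (by linarith) (hprod _ (by linarith))
  have hex : ∀ᶠ t in l, ∃ s : ℝ, lam κ - δ ≤ s ∧ (M t).charpoly.eval s = 0 := by
    filter_upwards [(hcp _).eventually_lt_const hneg, (hcp _).eventually_const_lt hpos]
      with t h1 h2
    obtain ⟨s, hs, hs0⟩ := intermediate_value_Icc (by linarith : lam κ - δ ≤ lam κ + δ)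
      ((M t).charpoly.continuous.continuousOn) ⟨h1.le, h2.le⟩
    exact ⟨s, hs.1, hs0⟩
  -- The total coupling between `κ` and the other coordinates.
  set β : ℝ → ℝ := fun t => ∑ i ∈ Finset.univ.erase κ, (‖M t i κ‖ + ‖M t κ i‖) with hβdef
  have hβ0 : ∀ t, 0 ≤ β t := fun t => Finset.sum_nonneg fun i _ => by positivity
  have hβle : ∀ t i, i ≠ κ → ‖M t i κ‖ + ‖M t κ i‖ ≤ β t := fun t i hi =>
    Finset.single_le_sum (f := fun i => ‖M t i κ‖ + ‖M t κ i‖)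
      (fun i _ => by positivity) (by simpa using hi)
  have hβO : β =O[l] fun t => t ^ (n + 2) := by
    refine IsBigO.fun_sum fun i hi => ?_
    have hi := Finset.ne_of_mem_erase hi
    exact (hoffk i κ hi (Or.inr rfl)).norm_left.add (hoffk κ i hi.symm (Or.inl rfl)).norm_left
  have hβlim : Tendsto β l (nhds 0) := hβO.trans_tendsto (hpow _ (by omega))
  have hsmall : ∀ᶠ t in l, (Fintype.card (Fin k) : ℝ) * (β t * (β t / δ / δ)) < 1 := by
    have h := (hβlim.mul ((hβlim.div_const δ).div_const δ)).const_mul (Fintype.card (Fin k) : ℝ)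
    exact h.eventually_lt_const (by simp)
  have heval : ∀ t (z : ℂ), aeval z (M t).charpoly =
      ((M t).map (algebraMap ℝ ℂ)).charpoly.eval z := by
    intro t z
    rw [Matrix.charpoly_map, eval_map_algebraMap]
  have hevalR : ∀ t (s : ℝ), (M t).charpoly.eval s = 0 → aeval (s : ℂ) (M t).charpoly = 0 := by
    intro t s hs
    have h := aeval_algebraMap_apply ℂ s (M t).charpoly
    rw [coe_aeval_eq_eval, hs, map_zero] at h
    exact h
  have hcolC : ∀ t i, i ≠ κ → ‖(M t).map (algebraMap ℝ ℂ) i κ‖ ≤ β t := by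
    intro t i hi
    have := hβle t i hi
    have := norm_nonneg (M t κ i)
    simp only [Matrix.map_apply, Complex.coe_algebraMap, Complex.norm_real]
    linarith
  have hrowC : ∀ t i, i ≠ κ → ‖(M t).map (algebraMap ℝ ℂ) κ i‖ ≤ β t := by
    intro t i hi
    have := hβle t i hi
    have := norm_nonneg (M t i κ)
    simp only [Matrix.map_apply, Complex.coe_algebraMap, Complex.norm_real]
    linarith
  obtain ⟨lamf, hlamf⟩ := hex.choice
  refine ⟨lamf, ?_, ?_⟩
  · filter_upwards [hlamf, hdom, hsmall] with t ⟨hge, hroot⟩ hd hs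
    have hr := hevalR t _ hroot
    refine ⟨hr, fun z hz hne => ?_⟩
    by_contra! hle
    apply hne
    rw [heval] at hr hz
    exact eigenvalue_unique _ κ δ (β t) hδ (hβ0 t) z (lamf t)
      (dominant_of_re (M t) κ δ _ hd z (hge.trans hle))
      (dominant_of_re (M t) κ δ _ hd (lamf t) (by simpa using hge))
      (hcolC t) (hrowC t) hs hz hr
  · have hnear : (fun t => lamf t - M t κ κ) =O[l] fun t => β t * β t := by
      refine IsBigO.of_bound (Fintype.card (Fin k) / δ) ?_
      filter_upwards [hlamf, hdom] with t ⟨hge, hroot⟩ hd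
      have hr := hevalR t _ hroot
      rw [heval] at hr
      have h := eigenvalue_near_diag _ κ δ (β t) hδ (hβ0 t) (lamf t)
        (dominant_of_re (M t) κ δ _ hd (lamf t) (by simpa using hge))
        (hcolC t) (hrowC t) hr
      rw [Matrix.map_apply, Complex.coe_algebraMap, ← Complex.ofReal_sub, Complex.norm_real] at h
      rw [Real.norm_of_nonneg (mul_nonneg (hβ0 t) (hβ0 t))]
      calc _ ≤ _ := h
        _ = _ := by ring
    have hββ : (fun t => β t * β t) =o[l] fun t : ℝ => t ^ (2 * n + 2) := by
      refine (hβO.mul hβO).trans_isLittleO ?_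
      have h : (fun t : ℝ => t ^ (2 * n + 4)) =o[nhds 0] fun t : ℝ => t ^ (2 * n + 2) :=
        isLittleO_pow_pow (by omega)
      refine (h.mono nhdsWithin_le_nhds).congr_left fun t => ?_
      ring
    refine ((hnear.trans_isLittleO hββ).add hlastdiag).congr_left fun t => ?_
    ring
end

section
/- Let φ be as in the standing hypotheses, and assume in addition that |φ(x)| = O(|x−a|^{1/2}) and |∇φ(x)| = O(|x−a|^{-1/2}) as x → a. Then for every r with a₁ < r < r₀ the function r ↦ H(φ,r,π(a)) is differentiable and (d/dr) H(φ,r,π(a)) = −(2i/r)·∫_{∂D_r⁺(π(a))} (i∇+A_a)φ·ν · conj(φ) dσ = (2/r)·E(φ,r,π(a),λ,A_a), where ν is the outward unit normal; in particular the boundary integral −i∫_{∂D_r⁺(π(a))} (i∇+A_a)φ·ν · conj(φ) dσ is real and equals E(φ,r,π(a),λ,A_a). -/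
/-!
Differentiating `H(φ,s,π(a)) = ∫ |φ(π(a) + s e^{iθ})|² dθ` under the integral sign gives
`H' = 2 ∫ Re(−i (i∇+A)φ·ν conj φ) dθ`, because `∇φ = −i(i∇+A)φ + iAφ` and the term with `A` is
orthogonal to `φ`. It remains to show that the flux `−i ∫ (i∇+A)φ·ν conj φ dσ` equals the energy
`E`, i.e. to integrate `div(−i conj φ (i∇+A)φ) = |(i∇+A)φ|² − λp|φ|²` over the half-disk. Two
difficulties have to be met.

*Boundedness of the gradient at the flat side.* Only continuity of `φ` is known up to `{x₁ = 0}`,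
but the differentiation under the integral and the passage to the limit on the arc need
`(i∇+A)φ` bounded at the end points of the arc (`mg_bounded_near_flat`, `mg_bounded_on_arcs`). For
`x₁ < a₁` the gauge `g = exp(−(i/2) arg(a − x))` turns the equation into `−Δu = λp u` for `u = gφ`,
with `|∇u| = |(i∇+A)φ|` (`gauged_derivs`). A maximum principle with a quadratic barrier
(`halfSquare_real`) gives `|u| ≤ K x₁`; the same barrier, applied to an antisymmetrization of `u`,
gives an interior gradient estimate (`square_gradient`), which at scale `x₁` bounds `∇u`.

*Divergence theorem without regularity at `a` and at the flat side.* The flux is multiplied by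
`T(n|φ|²)`, with `T` a smooth cutoff equal to `0` on `(−∞,1]` and to `1` on `[2,∞)`. Since `φ`
vanishes at `a` and on the flat side, the truncated flux is zero near these sets and the classical
divergence theorem in polar coordinates applies (`halfDisk_divergence`, `truncated_identity`). The
extra term in the divergence is at most a constant times `|(i∇+A)φ|²`, since `x T'(x)` is bounded,
and tends to `0` pointwise. Dominated convergence as `n → ∞`, together with `∇φ = 0` almost
everywhere on `{φ = 0}`, gives the identity (`energy_identity`).
-/

open MeasureTheory Real Filter Set Asymptotics

noncomputable section

/-- The open half-disk `D_r⁺(c)`: points at distance `< r` from `c` with positive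
first coordinate (we identify `ℝ²` with `ℂ`). -/
def halfDisk (c : ℂ) (r : ℝ) : Set ℂ := {x : ℂ | dist x c < r ∧ 0 < x.re}

/-- Projection onto the axis `{x₁ = 0}`: `π(a) = (0, a₂)`. -/
def proj (a : ℂ) : ℂ := (a.im : ℂ) * Complex.I

/-- First partial derivative of a complex-valued function on `ℝ² = ℂ`. -/
def pd1 (u : ℂ → ℂ) (x : ℂ) : ℂ := fderiv ℝ u x 1

/-- Second partial derivative of a complex-valued function on `ℝ² = ℂ`. -/
def pd2 (u : ℂ → ℂ) (x : ℂ) : ℂ := fderiv ℝ u x Complex.I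

/-- The Aharonov–Bohm potential `A_a(x)`, encoded as the complex number whose real and
imaginary parts are its two components:
`A_a(x) = (1/2)(−(x₂−a₂)/|x−a|², (x₁−a₁)/|x−a|²) = i(x−a)/(2|x−a|²)`. -/
def abPot (a x : ℂ) : ℂ := Complex.I * (x - a) / (2 * (‖x - a‖ : ℂ) ^ 2)

/-- First component of `A_a`. -/
def abPot1 (a x : ℂ) : ℝ := (abPot a x).re

/-- Second component of `A_a`. -/
def abPot2 (a x : ℂ) : ℝ := (abPot a x).im

/-- First component of the magnetic gradient `(i∇ + A_a)u`. -/
def mg1 (a : ℂ) (u : ℂ → ℂ) (x : ℂ) : ℂ := Complex.I * pd1 u x + (abPot1 a x : ℂ) * u x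

/-- Second component of the magnetic gradient `(i∇ + A_a)u`. -/
def mg2 (a : ℂ) (u : ℂ → ℂ) (x : ℂ) : ℂ := Complex.I * pd2 u x + (abPot2 a x : ℂ) * u x

/-- `|(i∇+A_a)u|²`. -/
def mgSq (a : ℂ) (u : ℂ → ℂ) (x : ℂ) : ℝ := ‖mg1 a u x‖ ^ 2 + ‖mg2 a u x‖ ^ 2

/-- Arclength integral of `f` over the circular part `∂D_r⁺(c)` of the boundary of a
half-disk centered at a point `c` on the axis `{x₁ = 0}`, parametrized by the angle
`θ ∈ (−π/2, π/2)`. -/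
def bdryInt (c : ℂ) (r : ℝ) (f : ℂ → ℝ) : ℝ :=
  ∫ θ in Ioo (-(π / 2)) (π / 2), r * f (circleMap c r θ)

/-- The Laplacian of a complex-valued function. -/
def lapC (u : ℂ → ℂ) (x : ℂ) : ℂ :=
  fderiv ℝ (fun y => pd1 u y) x 1 + fderiv ℝ (fun y => pd2 u y) x Complex.I

/-- Divergence `∇·A_a`. -/
def divAB (a x : ℂ) : ℝ := fderiv ℝ (abPot1 a) x 1 + fderiv ℝ (abPot2 a) x Complex.I

/-- The magnetic Laplacian `(i∇+A_a)²u = −Δu + i(∇·A_a)u + 2i A_a·∇u + |A_a|²u`. -/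
def magLap (a : ℂ) (u : ℂ → ℂ) (x : ℂ) : ℂ :=
  - lapC u x + Complex.I * (divAB a x : ℂ) * u x
    + 2 * Complex.I * ((abPot1 a x : ℂ) * pd1 u x + (abPot2 a x : ℂ) * pd2 u x)
    + ((abPot1 a x ^ 2 + abPot2 a x ^ 2 : ℝ) : ℂ) * u x

/-- The Almgren energy `E(u,r,c,λ,A_a) = ∫_{D_r⁺(c)} (|(i∇+A_a)u|² − λp|u|²) dx`. -/
def Efun (a : ℂ) (u : ℂ → ℂ) (r : ℝ) (c : ℂ) (lam : ℝ) (p : ℂ → ℝ) : ℝ :=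
  ∫ x in halfDisk c r, (mgSq a u x - lam * p x * ‖u x‖ ^ 2)

/-- `H(u,r,c) = (1/r)∫_{∂D_r⁺(c)} |u|² dσ`. -/
def Hfun (u : ℂ → ℂ) (r : ℝ) (c : ℂ) : ℝ := (1 / r) * bdryInt c r fun x => ‖u x‖ ^ 2

/-- The Almgren frequency `N = E/H`. -/
def Nfun (a : ℂ) (u : ℂ → ℂ) (r : ℝ) (c : ℂ) (lam : ℝ) (p : ℂ → ℝ) : ℝ :=
  Efun a u r c lam p / Hfun u r c

/-! ### Gradient estimates by barriers -/

/-- Necessary second-order condition at a local maximum on the line. -/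
lemma second_deriv_nonpos_of_isLocalMax {f f' : ℝ → ℝ} {f'' x : ℝ} (hmax : IsLocalMax f x)
    (h1 : ∀ᶠ y in nhds x, HasDerivAt f (f' y) y) (h2 : HasDerivAt f' f'' x) : f'' ≤ 0 := by
  by_contra hpos
  push Not at hpos
  have hd : deriv f =ᶠ[nhds x] f' := h1.mono fun y hy => hy.deriv
  have hdd : deriv (deriv f) x = f'' := by rw [hd.deriv_eq]; exact h2.deriv
  have hmin : IsLocalMin f x := isLocalMin_of_deriv_deriv_pos (by rw [hdd]; exact hpos)
    hmax.deriv_eq_zero h1.self_of_nhds.continuousAt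
  have hconst : f =ᶠ[nhds x] fun _ => f x := by
    filter_upwards [hmax, hmin] with y hy1 hy2 using le_antisymm hy1 hy2
  have h3 : deriv f =ᶠ[nhds x] fun _ => 0 := by
    have := hconst.deriv
    simpa using this
  have : deriv (deriv f) x = 0 := by rw [h3.deriv_eq]; simp
  linarith

/-- Linear decay at the flat side of a half-square: comparison of `w` with the quadratic barrier
`M/d² (y² + x(2d − x)) + N x(d − x)/2`, whose Laplacian is `−N`, through the maximum principle. -/
lemma halfSquare_real (w wx wxx wy wyy : ℝ → ℝ → ℝ) (d M N : ℝ) (hd : 0 < d) (hM : 0 ≤ M)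
    (hN : 0 ≤ N)
    (hc : ContinuousOn (fun q : ℝ × ℝ => w q.1 q.2) (Icc 0 d ×ˢ Icc (-d) d))
    (h1 : ∀ x ∈ Ioo 0 d, ∀ y ∈ Ioo (-d) d,
      HasDerivAt (fun s => w s y) (wx x y) x ∧ HasDerivAt (fun s => wx s y) (wxx x y) x ∧
      HasDerivAt (fun s => w x s) (wy x y) y ∧ HasDerivAt (fun s => wy x s) (wyy x y) y ∧
      -N < wxx x y + wyy x y)
    (h0 : ∀ y ∈ Icc (-d) d, w 0 y ≤ 0)
    (hb : ∀ x ∈ Icc 0 d, ∀ y ∈ Icc (-d) d, w x y ≤ M) (t : ℝ) (ht : t ∈ Icc 0 d) :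
    w t 0 ≤ (2 * M / d + N * d / 2) * t := by
  set ψ : ℝ → ℝ → ℝ := fun x y => M / d ^ 2 * (y ^ 2 + x * (2 * d - x)) + N * (x * (d - x)) / 2
    with hψ
  have hMd : 0 ≤ M / d ^ 2 := by positivity
  have hMM : M / d ^ 2 * d ^ 2 = M := by field_simp
  have hcψ : ContinuousOn (fun q : ℝ × ℝ => w q.1 q.2 - ψ q.1 q.2) (Icc 0 d ×ˢ Icc (-d) d) := by
    refine hc.sub (Continuous.continuousOn ?_)
    simp only [hψ]
    fun_prop
  obtain ⟨z, hz, hzmax⟩ := (isCompact_Icc.prod isCompact_Icc).exists_isMaxOn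
    ⟨((0 : ℝ), (0 : ℝ)), ⟨⟨le_rfl, hd.le⟩, ⟨by simp [hd.le], hd.le⟩⟩⟩ hcψ
  obtain ⟨x, y⟩ := z
  obtain ⟨hx, hy⟩ := hz
  simp only at hx hy
  have key : w x y - ψ x y ≤ 0 := by
    by_cases hin : x ∈ Ioo 0 d ∧ y ∈ Ioo (-d) d
    · exfalso
      obtain ⟨hx', hy'⟩ := hin
      have e1 : ∀ᶠ s in nhds x, s ∈ Ioo 0 d := Ioo_mem_nhds hx'.1 hx'.2
      have e2 : ∀ᶠ s in nhds y, s ∈ Ioo (-d) d := Ioo_mem_nhds hy'.1 hy'.2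
      have m1 : IsLocalMax (fun s => w s y - ψ s y) x := by
        filter_upwards [e1] with s hs
        exact hzmax (show (s, y) ∈ _ from ⟨⟨hs.1.le, hs.2.le⟩, hy⟩)
      have m2 : IsLocalMax (fun s => w x s - ψ x s) y := by
        filter_upwards [e2] with s hs
        exact hzmax (show (x, s) ∈ _ from ⟨hx, ⟨hs.1.le, hs.2.le⟩⟩)
      have d1 : wxx x y - (M / d ^ 2 * (-2) - N) ≤ 0 := by
        refine second_deriv_nonpos_of_isLocalMax m1
          (f' := fun s => wx s y - (M / d ^ 2 * (2 * d - 2 * s) + N * (d - 2 * s) / 2)) ?_ ?_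
        · filter_upwards [e1] with s hs
          refine (h1 s hs y hy').1.sub ?_
          have q1 : HasDerivAt (fun s : ℝ => s * (2 * d - s)) (1 * (2 * d - s) + s * (-1)) s :=
            (hasDerivAt_id s).mul ((hasDerivAt_id s).const_sub _)
          have q2 : HasDerivAt (fun s : ℝ => s * (d - s)) (1 * (d - s) + s * (-1)) s :=
            (hasDerivAt_id s).mul ((hasDerivAt_id s).const_sub _)
          have := ((q1.const_add (y ^ 2)).const_mul (M / d ^ 2)).add
            ((q2.const_mul N).div_const 2)
          exact this.congr_deriv (by ring)
        · refine (h1 x hx' y hy').2.1.sub ?_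
          have q1 : HasDerivAt (fun s : ℝ => 2 * d - 2 * s) (-(2 * 1)) x :=
            ((hasDerivAt_id x).const_mul 2).const_sub _
          have q2 : HasDerivAt (fun s : ℝ => d - 2 * s) (-(2 * 1)) x :=
            ((hasDerivAt_id x).const_mul 2).const_sub _
          exact ((q1.const_mul (M / d ^ 2)).add ((q2.const_mul N).div_const 2)).congr_deriv
            (by ring)
      have d2 : wyy x y - M / d ^ 2 * 2 ≤ 0 := by
        refine second_deriv_nonpos_of_isLocalMax m2
          (f' := fun s => wy x s - (M / d ^ 2 * (2 * s))) ?_ ?_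
        · filter_upwards [e2] with s hs
          refine (h1 x hx' s hs).2.2.1.sub ?_
          have q1 : HasDerivAt (fun s : ℝ => s ^ 2) (2 * s) s := by
            simpa using hasDerivAt_pow 2 s
          exact ((q1.add_const _).const_mul (M / d ^ 2)).add_const _
        · refine (h1 x hx' y hy').2.2.2.1.sub ?_
          have q1 : HasDerivAt (fun s : ℝ => 2 * s) (2 * 1) y := (hasDerivAt_id y).const_mul 2
          exact (q1.const_mul (M / d ^ 2)).congr_deriv (by ring)
      have d3 := (h1 x hx' y hy').2.2.2.2
      linarith
    · have hxd : 0 ≤ x * (d - x) := mul_nonneg hx.1 (by linarith [hx.2])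
      have hNx : 0 ≤ N * (x * (d - x)) / 2 := by positivity
      have hcases : x = 0 ∨ x = d ∨ y = -d ∨ y = d := by
        by_contra hcon
        push Not at hcon
        exact hin ⟨⟨lt_of_le_of_ne hx.1 (Ne.symm hcon.1), lt_of_le_of_ne hx.2 hcon.2.1⟩,
          ⟨lt_of_le_of_ne hy.1 (Ne.symm hcon.2.2.1), lt_of_le_of_ne hy.2 hcon.2.2.2⟩⟩
      have big : d ^ 2 ≤ y ^ 2 + x * (2 * d - x) → w x y - ψ x y ≤ 0 := by
        intro hge
        have := mul_le_mul_of_nonneg_left hge hMd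
        have := hb x hx y hy
        simp only [hψ]
        linarith
      rcases hcases with h | h | h | h
      · subst h
        have := h0 y hy
        have : 0 ≤ M / d ^ 2 * y ^ 2 := by positivity
        simp only [hψ]
        linarith
      · apply big; subst h; nlinarith [sq_nonneg y]
      · apply big; subst h; nlinarith [hx.1, hx.2]
      · apply big; subst h; nlinarith [hx.1, hx.2]
  have h2 : w t 0 - ψ t 0 ≤ w x y - ψ x y :=
    hzmax (show (t, (0 : ℝ)) ∈ _ from ⟨ht, ⟨by simp [hd.le], hd.le⟩⟩)
  have h3 : ψ t 0 ≤ (2 * M / d + N * d / 2) * t := by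
    have e : (2 * M / d + N * d / 2) * t - ψ t 0 = M / d ^ 2 * t ^ 2 + N * t ^ 2 / 2 := by
      simp only [hψ]; field_simp; ring
    have : 0 ≤ M / d ^ 2 * t ^ 2 + N * t ^ 2 / 2 := by positivity
    linarith
  linarith

/-- Complex-valued form of `halfSquare_real`, obtained by testing against unit multiples. -/
lemma halfSquare_complex (w wx wxx wy wyy : ℝ → ℝ → ℂ) (d M N : ℝ) (hd : 0 < d) (hM : 0 ≤ M)
    (hN : 0 ≤ N)
    (hc : ContinuousOn (fun q : ℝ × ℝ => w q.1 q.2) (Icc 0 d ×ˢ Icc (-d) d))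
    (h1 : ∀ x ∈ Ioo 0 d, ∀ y ∈ Ioo (-d) d,
      HasDerivAt (fun s => w s y) (wx x y) x ∧ HasDerivAt (fun s => wx s y) (wxx x y) x ∧
      HasDerivAt (fun s => w x s) (wy x y) y ∧ HasDerivAt (fun s => wy x s) (wyy x y) y ∧
      ‖wxx x y + wyy x y‖ < N)
    (h0 : ∀ y ∈ Icc (-d) d, w 0 y = 0)
    (hb : ∀ x ∈ Icc 0 d, ∀ y ∈ Icc (-d) d, ‖w x y‖ ≤ M) (t : ℝ) (ht : t ∈ Icc 0 d) :
    ‖w t 0‖ ≤ (2 * M / d + N * d / 2) * t := by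
  by_cases hz : w t 0 = 0
  · rw [hz, norm_zero]
    have := ht.1
    positivity
  set ζ : ℂ := (starRingEnd ℂ) (w t 0) / ‖w t 0‖ with hζ
  have hn : (‖w t 0‖ : ℝ) ≠ 0 := by simpa using hz
  have hζ1 : ‖ζ‖ = 1 := by
    simp [hζ, hz]
  have hre : (ζ * w t 0).re = ‖w t 0‖ := by
    have : ζ * w t 0 = (‖w t 0‖ : ℂ) := by
      rw [hζ, div_mul_eq_mul_div, Complex.conj_mul', div_eq_iff (by exact_mod_cast hn)]
      ring
    rw [this, Complex.ofReal_re]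
  have hder : ∀ {f : ℝ → ℂ} {f' : ℂ} {x : ℝ}, HasDerivAt f f' x →
      HasDerivAt (fun s => (ζ * f s).re) (ζ * f').re x := fun h =>
    Complex.reCLM.hasFDerivAt.comp_hasDerivAt _ (h.const_mul ζ)
  have hle : ∀ z : ℂ, |(ζ * z).re| ≤ ‖z‖ := fun z => by
    simpa [hζ1] using Complex.abs_re_le_norm (ζ * z)
  have := halfSquare_real (fun x y => (ζ * w x y).re) (fun x y => (ζ * wx x y).re)
    (fun x y => (ζ * wxx x y).re) (fun x y => (ζ * wy x y).re) (fun x y => (ζ * wyy x y).re)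
    d M N hd hM hN
    (Complex.continuous_re.comp_continuousOn (hc.const_smul ζ))
    (fun x hx y hy => by
      obtain ⟨a1, a2, a3, a4, a5⟩ := h1 x hx y hy
      refine ⟨hder a1, hder a2, hder a3, hder a4, ?_⟩
      have h6 := hle (wxx x y + wyy x y)
      rw [mul_add, Complex.add_re] at h6
      linarith [neg_abs_le ((ζ * wxx x y).re + (ζ * wyy x y).re)])
    (fun y hy => by simp [h0 y hy])
    (fun x hx y hy => ((le_abs_self _).trans (hle _)).trans (hb x hx y hy)) t ht
  simpa only [hre] using this

/-- Interior gradient estimate for Poisson's equation on a square: the antisymmetrization of `U`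
in the first variable vanishes on the axis, so `halfSquare_complex` bounds its slope there. -/
lemma square_gradient (U Ux Uxx Uy Uyy : ℝ → ℝ → ℂ) (d M N : ℝ) (hd : 0 < d) (hM : 0 ≤ M)
    (hN : 0 ≤ N)
    (hc : ContinuousOn (fun q : ℝ × ℝ => U q.1 q.2) (Icc (-d) d ×ˢ Icc (-d) d))
    (h1 : ∀ x ∈ Ioo (-d) d, ∀ y ∈ Ioo (-d) d,
      HasDerivAt (fun s => U s y) (Ux x y) x ∧ HasDerivAt (fun s => Ux s y) (Uxx x y) x ∧
      HasDerivAt (fun s => U x s) (Uy x y) y ∧ HasDerivAt (fun s => Uy x s) (Uyy x y) y ∧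
      ‖Uxx x y + Uyy x y‖ < N)
    (hb : ∀ x ∈ Icc (-d) d, ∀ y ∈ Icc (-d) d, ‖U x y‖ ≤ M) :
    ‖Ux 0 0‖ ≤ 2 * M / d + N * d / 2 := by
  have hrefl : ∀ {f : ℝ → ℂ} {f' : ℂ} {x : ℝ}, HasDerivAt f f' (-x) →
      HasDerivAt (fun s => f (-s)) (-f') x := fun {f f' x} h => by
    have := h.scomp x (hasDerivAt_neg x)
    simpa [Function.comp_def] using this
  have hmem0 : (0 : ℝ) ∈ Ioo (-d) d := ⟨by linarith, hd⟩
  have key : ∀ t ∈ Icc (0 : ℝ) d, ‖(U t 0 - U (-t) 0) / 2‖ ≤ (2 * M / d + N * d / 2) * t := by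
    intro t ht
    refine halfSquare_complex (fun x y => (U x y - U (-x) y) / 2)
      (fun x y => (Ux x y + Ux (-x) y) / 2) (fun x y => (Uxx x y - Uxx (-x) y) / 2)
      (fun x y => (Uy x y - Uy (-x) y) / 2) (fun x y => (Uyy x y - Uyy (-x) y) / 2)
      d M N hd hM hN ?_ ?_ ?_ ?_ t ht
    · refine ContinuousOn.div_const (ContinuousOn.sub (hc.mono ?_) ?_) 2
      · exact Set.prod_mono (Icc_subset_Icc_left (by linarith)) le_rfl
      · refine hc.comp (f := fun q : ℝ × ℝ => (-q.1, q.2)) (by fun_prop) ?_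
        rintro ⟨x, y⟩ ⟨hx, hy⟩
        simp only [mem_Icc] at hx hy
        exact ⟨⟨by simp; linarith, by simp; linarith⟩, hy⟩
    · intro x hx y hy
      have hx1 : x ∈ Ioo (-d) d := ⟨by linarith [hx.1], hx.2⟩
      have hx2 : -x ∈ Ioo (-d) d := ⟨by linarith [hx.2], by linarith [hx.1]⟩
      obtain ⟨a1, a2, a3, a4, a5⟩ := h1 x hx1 y hy
      obtain ⟨b1, b2, b3, b4, b5⟩ := h1 (-x) hx2 y hy
      refine ⟨?_, ?_, ?_, ?_, ?_⟩
      · exact ((a1.sub (hrefl b1)).div_const 2).congr_deriv (by ring)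
      · exact ((a2.add (hrefl b2)).div_const 2).congr_deriv (by ring)
      · exact (a3.sub b3).div_const 2
      · exact (a4.sub b4).div_const 2
      · have : (Uxx x y - Uxx (-x) y) / 2 + (Uyy x y - Uyy (-x) y) / 2 =
          ((Uxx x y + Uyy x y) - (Uxx (-x) y + Uyy (-x) y)) / 2 := by ring
        rw [this, norm_div]
        have := norm_sub_le (Uxx x y + Uyy x y) (Uxx (-x) y + Uyy (-x) y)
        simp only [Complex.norm_ofNat]
        linarith
    · intro y _; simp
    · intro x hx y hy
      have b1 := hb x ⟨by linarith [hx.1], hx.2⟩ y hy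
      have b2 := hb (-x) ⟨by linarith [hx.2], by linarith [hx.1]⟩ y hy
      have := norm_sub_le (U x y) (U (-x) y)
      rw [norm_div]
      simp only [Complex.norm_ofNat]
      linarith
  have hder : HasDerivAt (fun s => (U s 0 - U (-s) 0) / 2) (Ux 0 0) 0 := by
    have a1 := (h1 0 hmem0 0 hmem0).1
    have b1 : HasDerivAt (fun s => U s 0) (Ux 0 0) (-0) := by simpa using a1
    exact ((a1.sub (hrefl b1)).div_const 2).congr_deriv (by ring)
  have hlim := (hasDerivAt_iff_tendsto_slope.1 hder).mono_left
    (nhdsWithin_mono _ (fun x (hx : x ∈ Ioi (0 : ℝ)) => (ne_of_gt hx : x ≠ 0)))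
  refine le_of_tendsto hlim.norm ?_
  filter_upwards [Ioo_mem_nhdsGT hd] with s hs
  have hk := key s ⟨hs.1.le, hs.2.le⟩
  rw [slope_def_module]
  simp only [neg_zero, sub_self, zero_div, sub_zero, norm_smul, norm_inv, Real.norm_eq_abs,
    abs_of_pos hs.1]
  rw [inv_mul_le_iff₀ hs.1]
  linarith

/-! ### Magnetic gradient and gauge transformation -/

lemma abPot_contDiffAt {a x : ℂ} (hx : x ≠ a) : ContDiffAt ℝ 2 (abPot a) x := by
  unfold abPot
  have h0 : x - a ≠ 0 := sub_ne_zero.2 hx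
  have h1 : ContDiffAt ℝ 2 (fun y : ℂ => y - a) x := contDiffAt_id.sub contDiffAt_const
  have h2 : ContDiffAt ℝ 2 (fun y : ℂ => (‖y - a‖ : ℂ)) x :=
    Complex.ofRealCLM.contDiff.contDiffAt.comp x (h1.norm ℝ h0)
  simp only [div_eq_mul_inv]
  refine (contDiffAt_const.mul h1).mul (ContDiffAt.inv (contDiffAt_const.mul (h2.pow 2)) ?_)
  have : (‖x - a‖ : ℂ) ≠ 0 := by exact_mod_cast norm_ne_zero_iff.2 h0
  exact mul_ne_zero two_ne_zero (pow_ne_zero 2 this)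

lemma abPot1_contDiffAt {a x : ℂ} (hx : x ≠ a) : ContDiffAt ℝ 2 (abPot1 a) x :=
  Complex.reCLM.contDiff.contDiffAt.comp x (abPot_contDiffAt hx)

lemma abPot2_contDiffAt {a x : ℂ} (hx : x ≠ a) : ContDiffAt ℝ 2 (abPot2 a) x :=
  Complex.imCLM.contDiff.contDiffAt.comp x (abPot_contDiffAt hx)

lemma pd1_contDiffAt {φ : ℂ → ℂ} {x : ℂ} (hφ : ContDiffAt ℝ 2 φ x) : ContDiffAt ℝ 1 (pd1 φ) x :=
  (hφ.fderiv_right (m := 1) (by norm_num)).clm_apply contDiffAt_const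

lemma pd2_contDiffAt {φ : ℂ → ℂ} {x : ℂ} (hφ : ContDiffAt ℝ 2 φ x) : ContDiffAt ℝ 1 (pd2 φ) x :=
  (hφ.fderiv_right (m := 1) (by norm_num)).clm_apply contDiffAt_const

lemma mg1_contDiffAt {a : ℂ} {φ : ℂ → ℂ} {x : ℂ} (hx : x ≠ a) (hφ : ContDiffAt ℝ 2 φ x) :
    ContDiffAt ℝ 1 (mg1 a φ) x :=
  (contDiffAt_const.mul (pd1_contDiffAt hφ)).add
    (((Complex.ofRealCLM.contDiff.contDiffAt.comp x (abPot1_contDiffAt hx)).of_le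
      (by norm_num)).mul (hφ.of_le (by norm_num)))

lemma mg2_contDiffAt {a : ℂ} {φ : ℂ → ℂ} {x : ℂ} (hx : x ≠ a) (hφ : ContDiffAt ℝ 2 φ x) :
    ContDiffAt ℝ 1 (mg2 a φ) x :=
  (contDiffAt_const.mul (pd2_contDiffAt hφ)).add
    (((Complex.ofRealCLM.contDiff.contDiffAt.comp x (abPot2_contDiffAt hx)).of_le
      (by norm_num)).mul (hφ.of_le (by norm_num)))

lemma fderiv_I_mul_add_ofReal_mul {P u : ℂ → ℂ} {q : ℂ → ℝ} {x : ℂ}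
    (hP : DifferentiableAt ℝ P x) (hq : DifferentiableAt ℝ q x) (hu : DifferentiableAt ℝ u x)
    (h : ℂ) :
    fderiv ℝ (fun y => Complex.I * P y + (q y : ℂ) * u y) x h =
      Complex.I * fderiv ℝ P x h + ((fderiv ℝ q x h : ℝ) : ℂ) * u x +
        (q x : ℂ) * fderiv ℝ u x h := by
  have hq' : HasFDerivAt (fun y => (q y : ℂ)) (Complex.ofRealCLM.comp (fderiv ℝ q x)) x :=
    Complex.ofRealCLM.hasFDerivAt.comp x hq.hasFDerivAt
  have key : HasFDerivAt (fun y => Complex.I * P y + (q y : ℂ) * u y) _ x :=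
    (hP.hasFDerivAt.const_mul Complex.I).add (hq'.mul hu.hasFDerivAt)
  rw [key.fderiv]
  simp
  ring

/-- The magnetic Laplacian factors as `(i∇+A)·(i∇+A)`. -/
lemma magLap_eq_div {a : ℂ} {φ : ℂ → ℂ} {x : ℂ} (hx : x ≠ a) (hφ : ContDiffAt ℝ 2 φ x) :
    magLap a φ x = Complex.I * (fderiv ℝ (mg1 a φ) x 1 + fderiv ℝ (mg2 a φ) x Complex.I) +
      ((abPot1 a x : ℂ) * mg1 a φ x + (abPot2 a x : ℂ) * mg2 a φ x) := by
  have hd : DifferentiableAt ℝ φ x := hφ.differentiableAt (by norm_num)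
  have e1 : fderiv ℝ (mg1 a φ) x 1 = _ := fderiv_I_mul_add_ofReal_mul
    ((pd1_contDiffAt hφ).differentiableAt (by norm_num))
    ((abPot1_contDiffAt hx).differentiableAt (by norm_num)) hd 1
  have e2 : fderiv ℝ (mg2 a φ) x Complex.I = _ := fderiv_I_mul_add_ofReal_mul
    ((pd2_contDiffAt hφ).differentiableAt (by norm_num))
    ((abPot2_contDiffAt hx).differentiableAt (by norm_num)) hd Complex.I
  rw [e1, e2]
  have p1 : fderiv ℝ φ x 1 = pd1 φ x := rfl
  have p2 : fderiv ℝ φ x Complex.I = pd2 φ x := rfl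
  have p3 : lapC φ x = fderiv ℝ (pd1 φ) x 1 + fderiv ℝ (pd2 φ) x Complex.I := rfl
  simp only [magLap, divAB, mg1, mg2, p1, p2, p3]
  push_cast
  linear_combination (-(fderiv ℝ (pd1 φ) x 1 + fderiv ℝ (pd2 φ) x Complex.I)) * Complex.I_sq

/-- `∇φ = −i (i∇+A)φ + i A φ`, first component. -/
lemma pd1_eq_mg1 (a : ℂ) (φ : ℂ → ℂ) (x : ℂ) :
    fderiv ℝ φ x 1 = -Complex.I * mg1 a φ x + Complex.I * (abPot1 a x : ℂ) * φ x := by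
  simp only [mg1, pd1]
  linear_combination (fderiv ℝ φ x 1) * Complex.I_sq

/-- `∇φ = −i (i∇+A)φ + i A φ`, second component. -/
lemma pd2_eq_mg2 (a : ℂ) (φ : ℂ → ℂ) (x : ℂ) :
    fderiv ℝ φ x Complex.I = -Complex.I * mg2 a φ x + Complex.I * (abPot2 a x : ℂ) * φ x := by
  simp only [mg2, pd2]
  linear_combination (fderiv ℝ φ x Complex.I) * Complex.I_sq

/-- A real-linear map on `ℂ = ℝ²` in terms of its two partial derivatives. -/
lemma clm_apply_eq (L : ℂ →L[ℝ] ℂ) (h : ℂ) :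
    L h = (h.re : ℂ) * L 1 + (h.im : ℂ) * L Complex.I := by
  have : h = h.re • (1 : ℂ) + h.im • Complex.I := by
    simp [Complex.re_add_im]
  conv_lhs => rw [this, map_add, map_smul, map_smul]
  simp

/-- The gauge factor `exp(−(i/2) arg(a − x))`, which is smooth on `{x₁ < a₁}` and satisfies
`∇g = −i A_a g` there. -/
def abGauge (a x : ℂ) : ℂ := Complex.exp (-Complex.I * ((Complex.log (a - x)).im : ℂ) / 2)

lemma norm_abGauge (a x : ℂ) : ‖abGauge a x‖ = 1 := by
  unfold abGauge
  rw [Complex.norm_exp]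
  simp

lemma abGauge_hasFDerivAt {a x : ℂ} (hx : x.re < a.re) :
    ∃ L : ℂ →L[ℝ] ℂ, HasFDerivAt (abGauge a) L x ∧
      L 1 = -Complex.I * (abPot1 a x : ℂ) * abGauge a x ∧
      L Complex.I = -Complex.I * (abPot2 a x : ℂ) * abGauge a x := by
  have hs : a - x ∈ Complex.slitPlane := by
    left; simpa using hx
  have hax : a - x ≠ 0 := Complex.slitPlane_ne_zero hs
  have h1 : HasDerivAt (fun y => Complex.log (a - y)) (-1 / (a - x)) x :=
    ((hasDerivAt_id x).const_sub a).clog hs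
  have h2 := h1.hasFDerivAt.restrictScalars ℝ
  have h3 := Complex.ofRealCLM.hasFDerivAt.comp x (Complex.imCLM.hasFDerivAt.comp x h2)
  have h4 := (((h3.const_mul (-Complex.I)).mul_const (2⁻¹ : ℂ))).cexp
  have hw : x - a ≠ 0 := by rw [← neg_sub]; exact neg_ne_zero.2 hax
  have hinv : -1 / (a - x) = (x - a)⁻¹ := by
    rw [← neg_sub x a, neg_div_neg_eq, one_div]
  have hsq : ((‖x - a‖ : ℝ) : ℂ) ^ 2 = ((Complex.normSq (x - a) : ℝ) : ℂ) := by
    rw [Complex.normSq_eq_norm_sq]; push_cast; rfl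
  have hns : Complex.normSq (x - a) ≠ 0 := by simpa using hw
  have hp : abPot a x = ((2 * Complex.normSq (x - a))⁻¹ : ℝ) * (Complex.I * (x - a)) := by
    rw [abPot, hsq]; push_cast; rw [div_eq_mul_inv, mul_comm]
  have p1 : (-1 / (a - x)).im = 2 * abPot1 a x := by
    rw [hinv, Complex.inv_im, abPot1, hp, Complex.re_ofReal_mul]
    simp only [Complex.I_mul_re, mul_inv]
    ring
  have p2 : (Complex.I * (-1 / (a - x))).im = 2 * abPot2 a x := by
    rw [hinv, Complex.I_mul_im, Complex.inv_re, abPot2, hp, Complex.im_ofReal_mul]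
    simp only [Complex.I_mul_im, mul_inv]
    ring
  refine ⟨_, h4.congr_of_eventuallyEq (.of_forall fun y => ?_), ?_, ?_⟩
  · simp [abGauge, div_eq_mul_inv]
  · simp only [abGauge]
    simp [-neg_mul, p1]
    ring_nf
  · simp only [abGauge]
    simp [-neg_mul, p2]
    ring_nf

/-! ### Boundedness of the magnetic gradient near the flat side -/

/-- The gauge-transformed function `u = g φ`, whose gradient is `−i g (i∇+A)φ`, satisfies
`−Δu = g (i∇+A)²φ`. -/
lemma gauged_derivs {a x : ℂ} {φ : ℂ → ℂ} (hx : x.re < a.re) (hφ : ContDiffAt ℝ 2 φ x) :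
    DifferentiableAt ℝ (fun y => abGauge a y * φ y) x ∧
    DifferentiableAt ℝ (fun y => abGauge a y * (-Complex.I * mg1 a φ y)) x ∧
    DifferentiableAt ℝ (fun y => abGauge a y * (-Complex.I * mg2 a φ y)) x ∧
    fderiv ℝ (fun y => abGauge a y * φ y) x 1 = abGauge a x * (-Complex.I * mg1 a φ x) ∧
    fderiv ℝ (fun y => abGauge a y * φ y) x Complex.I =
      abGauge a x * (-Complex.I * mg2 a φ x) ∧
    fderiv ℝ (fun y => abGauge a y * (-Complex.I * mg1 a φ y)) x 1 +
      fderiv ℝ (fun y => abGauge a y * (-Complex.I * mg2 a φ y)) x Complex.I =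
      -(abGauge a x * magLap a φ x) := by
  obtain ⟨L, hL, hL1, hL2⟩ := abGauge_hasFDerivAt hx
  have hne : x ≠ a := by rintro rfl; exact lt_irrefl _ hx
  have hd : HasFDerivAt φ (fderiv ℝ φ x) x :=
    (hφ.differentiableAt (by norm_num)).hasFDerivAt
  have hm1 := ((mg1_contDiffAt hne hφ).differentiableAt (by norm_num)).hasFDerivAt
  have hm2 := ((mg2_contDiffAt hne hφ).differentiableAt (by norm_num)).hasFDerivAt
  have k0 : HasFDerivAt (fun y => abGauge a y * φ y) _ x := hL.mul hd
  have k1 : HasFDerivAt (fun y => abGauge a y * (-Complex.I * mg1 a φ y)) _ x :=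
    hL.mul (hm1.const_mul (-Complex.I))
  have k2 : HasFDerivAt (fun y => abGauge a y * (-Complex.I * mg2 a φ y)) _ x :=
    hL.mul (hm2.const_mul (-Complex.I))
  refine ⟨k0.differentiableAt, k1.differentiableAt, k2.differentiableAt, ?_, ?_, ?_⟩
  · rw [k0.fderiv]
    simp [hL1, pd1_eq_mg1 a φ x]
    ring
  · rw [k0.fderiv]
    simp [hL2, pd2_eq_mg2 a φ x]
    ring
  · rw [k1.fderiv, k2.fderiv, magLap_eq_div hne hφ]
    simp [hL1, hL2]
    linear_combination (abGauge a x * (abPot1 a x * mg1 a φ x + abPot2 a x * mg2 a φ x)) *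
      Complex.I_sq

lemma proj_re (a : ℂ) : (proj a).re = 0 := by simp [proj]

lemma proj_im (a : ℂ) : (proj a).im = a.im := by simp [proj]

lemma dist_proj_le (a x : ℂ) : dist x (proj a) ≤ |x.re| + |x.im - a.im| := by
  rw [Complex.dist_eq]
  simpa [proj_re, proj_im] using Complex.norm_le_abs_re_add_abs_im (x - proj a)

lemma abs_im_sub_le_dist_proj (a x : ℂ) : |x.im - a.im| ≤ dist x (proj a) := by
  rw [Complex.dist_eq]
  simpa [proj_im] using Complex.abs_im_le_norm (x - proj a)

lemma isOpen_halfDisk (c : ℂ) (r : ℝ) : IsOpen (halfDisk c r) :=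
  (isOpen_lt (f := fun x : ℂ => dist x c) (by fun_prop) continuous_const).inter
    (isOpen_lt continuous_const Complex.continuous_re)

lemma isCompact_closure_halfDisk (c : ℂ) (r : ℝ) : IsCompact (closure (halfDisk c r)) :=
  (Metric.isBounded_ball.subset (fun _ hx => hx.1 : halfDisk c r ⊆ Metric.ball c r)).isCompact_closure

lemma mem_closure_halfDisk {c x : ℂ} {r : ℝ} (h1 : dist x c < r) (h2 : 0 ≤ x.re) :
    x ∈ closure (halfDisk c r) := by
  have ht : Tendsto (fun s : ℝ => x + s) (nhdsWithin 0 (Ioi 0)) (nhds x) := by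
    have : Tendsto (fun s : ℝ => x + s) (nhds 0) (nhds (x + (0 : ℝ))) :=
      (Continuous.tendsto (by fun_prop) _)
    simpa using this.mono_left nhdsWithin_le_nhds
  refine mem_closure_of_tendsto ht ?_
  have h3 : ∀ᶠ y in nhds x, dist y c < r :=
    (isOpen_lt (by fun_prop) continuous_const).mem_nhds h1
  filter_upwards [ht.eventually h3, self_mem_nhdsWithin] with s hs1 hs2
  have : 0 < s := hs2
  exact ⟨hs1, by simp; linarith⟩

lemma hasDerivAt_cell_left (z e f : ℂ) (s t : ℝ) :
    HasDerivAt (fun s : ℝ => z + s * e + t * f) e s := by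
  simpa using ((((hasDerivAt_id s).ofReal_comp).mul_const e).const_add z).add_const (t * f)

lemma hasDerivAt_cell_right (z e f : ℂ) (s t : ℝ) :
    HasDerivAt (fun t : ℝ => z + s * e + t * f) f t := by
  simpa using (((hasDerivAt_id t).ofReal_comp).mul_const f).const_add (z + s * e)

/-- `halfSquare_complex` for a function on `ℂ`, on the half-square based at `z` spanned by the
directions `e` and `f`. -/
lemma halfSquare_cell (S : Set ℂ) (u0 ue uf : ℂ → ℂ) (z e f : ℂ) (d M N : ℝ) (hd : 0 < d)
    (hM : 0 ≤ M) (hN : 0 ≤ N)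
    (hc : ∀ s ∈ Icc 0 d, ∀ t ∈ Icc (-d) d, ∀ x, x = z + s * e + t * f →
      x ∈ S ∧ ContinuousWithinAt u0 S x ∧ ‖u0 x‖ ≤ M)
    (h0 : ∀ t ∈ Icc (-d) d, u0 (z + t * f) = 0)
    (h : ∀ s ∈ Ioo 0 d, ∀ t ∈ Ioo (-d) d, ∀ x, x = z + s * e + t * f →
      DifferentiableAt ℝ u0 x ∧ DifferentiableAt ℝ ue x ∧ DifferentiableAt ℝ uf x ∧
      fderiv ℝ u0 x e = ue x ∧ fderiv ℝ u0 x f = uf x ∧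
      ‖fderiv ℝ ue x e + fderiv ℝ uf x f‖ < N) (s : ℝ) (hs : s ∈ Icc 0 d) :
    ‖u0 (z + s * e)‖ ≤ (2 * M / d + N * d / 2) * s := by
  have := halfSquare_complex (fun s t => u0 (z + s * e + t * f))
    (fun s t => ue (z + s * e + t * f))
    (fun s t => fderiv ℝ ue (z + s * e + t * f) e) (fun s t => uf (z + s * e + t * f))
    (fun s t => fderiv ℝ uf (z + s * e + t * f) f) d M N hd hM hN ?_ ?_ ?_ ?_ s hs
  · simpa using this
  · rintro ⟨s, t⟩ ⟨hs, ht⟩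
    refine ContinuousWithinAt.comp (t := S)
      (f := fun q : ℝ × ℝ => z + (q.1 : ℂ) * e + (q.2 : ℂ) * f) (hc s hs t ht _ rfl).2.1
      (Continuous.continuousWithinAt (by fun_prop)) ?_
    rintro ⟨s', t'⟩ ⟨hs', ht'⟩
    exact (hc s' hs' t' ht' _ rfl).1
  · intro s hs t ht
    obtain ⟨D0, D1, D2, E1, E2, E3⟩ := h s hs t ht _ rfl
    refine ⟨?_, D1.hasFDerivAt.comp_hasDerivAt s (hasDerivAt_cell_left _ _ _ s t), ?_,
      D2.hasFDerivAt.comp_hasDerivAt t (hasDerivAt_cell_right _ _ _ s t), E3⟩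
    · rw [← E1]
      exact D0.hasFDerivAt.comp_hasDerivAt s (hasDerivAt_cell_left _ _ _ s t)
    · rw [← E2]
      exact D0.hasFDerivAt.comp_hasDerivAt t (hasDerivAt_cell_right _ _ _ s t)
  · intro t ht; simpa using h0 t ht
  · intro s hs t ht
    exact (hc s hs t ht _ rfl).2.2

/-- `square_gradient` for a function on `ℂ`, on the square centred at `z` spanned by the
directions `e` and `f`. -/
lemma square_gradient_cell (u0 ue uf : ℂ → ℂ) (z e f : ℂ) (l M N : ℝ) (hl : 0 < l) (hM : 0 ≤ M)
    (hN : 0 ≤ N)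
    (h : ∀ s ∈ Icc (-l) l, ∀ t ∈ Icc (-l) l, ∀ x, x = z + s * e + t * f →
      DifferentiableAt ℝ u0 x ∧ DifferentiableAt ℝ ue x ∧ DifferentiableAt ℝ uf x ∧
      fderiv ℝ u0 x e = ue x ∧ fderiv ℝ u0 x f = uf x ∧
      ‖fderiv ℝ ue x e + fderiv ℝ uf x f‖ < N ∧ ‖u0 x‖ ≤ M) :
    ‖ue z‖ ≤ 2 * M / l + N * l / 2 := by
  have := square_gradient (fun s t => u0 (z + s * e + t * f)) (fun s t => ue (z + s * e + t * f))
    (fun s t => fderiv ℝ ue (z + s * e + t * f) e) (fun s t => uf (z + s * e + t * f))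
    (fun s t => fderiv ℝ uf (z + s * e + t * f) f) l M N hl hM hN ?_ ?_ ?_
  · simpa using this
  · rintro ⟨s, t⟩ ⟨hs, ht⟩
    exact (ContinuousAt.comp (f := fun q : ℝ × ℝ => z + (q.1 : ℂ) * e + (q.2 : ℂ) * f)
      (x := (s, t)) (h s hs t ht _ rfl).1.continuousAt
      (Continuous.continuousAt (by fun_prop))).continuousWithinAt
  · intro s hs t ht
    obtain ⟨D0, D1, D2, E1, E2, E3, -⟩ :=
      h s (Ioo_subset_Icc_self hs) t (Ioo_subset_Icc_self ht) _ rfl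
    refine ⟨?_, D1.hasFDerivAt.comp_hasDerivAt s (hasDerivAt_cell_left _ _ _ s t), ?_,
      D2.hasFDerivAt.comp_hasDerivAt t (hasDerivAt_cell_right _ _ _ s t), E3⟩
    · rw [← E1]
      exact D0.hasFDerivAt.comp_hasDerivAt s (hasDerivAt_cell_left _ _ _ s t)
    · rw [← E2]
      exact D0.hasFDerivAt.comp_hasDerivAt t (hasDerivAt_cell_right _ _ _ s t)
  · intro s hs t ht
    exact (h s hs t ht _ rfl).2.2.2.2.2.2

/-- Boundary regularity at the flat part: `(i∇+A)φ` stays bounded up to `{x₁ = 0}` on smaller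
half-disks. The half-square comparison gives `|φ| ≤ K x₁`, and the interior gradient estimate on
squares of side `x₁` turns this into a gradient bound. -/
lemma mg_bounded_near_flat (a : ℂ) (ha : 0 < a.re) (r₀ : ℝ) (φ q : ℂ → ℂ) (B : ℝ)
    (hq : ∀ x, ‖q x‖ ≤ B)
    (hcont : ContinuousOn φ (closure (halfDisk (proj a) r₀)))
    (hbc : ∀ x ∈ closure (halfDisk (proj a) r₀), x.re = 0 → φ x = 0)
    (hC2 : ∀ x ∈ halfDisk (proj a) r₀ \ {a}, ContDiffAt ℝ 2 φ x)
    (heq : ∀ x ∈ halfDisk (proj a) r₀ \ {a}, magLap a φ x = q x * φ x)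
    (r : ℝ) (hr0 : r < r₀) :
    ∃ δ > 0, ∃ K, ∀ z ∈ halfDisk (proj a) r, z.re ≤ δ → ‖mg1 a φ z‖ ≤ K ∧ ‖mg2 a φ z‖ ≤ K := by
  obtain ⟨M, hM⟩ := (isCompact_closure_halfDisk (proj a) r₀).exists_bound_of_continuousOn hcont
  have hB : 0 ≤ B := (norm_nonneg _).trans (hq 0)
  wlog hM0 : 0 ≤ M generalizing M
  · exact this 0 (fun x hx => (hM x hx).trans (by linarith)) le_rfl
  set N := B * M + 1 with hNdef
  have hN : 0 ≤ N := by positivity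
  set d := min (a.re / 2) ((r₀ - r) / 8) with hd
  have hd0 : 0 < d := lt_min (by linarith) (by linarith)
  have hda : d < a.re := (min_le_left _ _).trans_lt (by linarith)
  have hdr : 8 * d ≤ r₀ - r := by
    have : d ≤ (r₀ - r) / 8 := min_le_right _ _
    linarith
  have hgood : ∀ x : ℂ, dist x (proj a) < r₀ → 0 < x.re → x.re < a.re →
      x ∈ halfDisk (proj a) r₀ \ {a} := fun x h1 h2 h3 =>
    ⟨⟨h1, h2⟩, fun h => by rw [mem_singleton_iff.1 h] at h3; exact lt_irrefl _ h3⟩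
  have hlap : ∀ x : ℂ, dist x (proj a) < r₀ → 0 < x.re → x.re < a.re →
      ‖-(abGauge a x * magLap a φ x)‖ < N := by
    intro x h1 h2 h3
    rw [norm_neg, norm_mul, norm_abGauge, one_mul, heq x (hgood x h1 h2 h3), norm_mul]
    have : ‖q x‖ * ‖φ x‖ ≤ B * M :=
      mul_le_mul (hq x) (hM x (subset_closure ⟨h1, h2⟩)) (norm_nonneg _) hB
    linarith
  have hucont : ∀ x : ℂ, dist x (proj a) < r₀ → 0 ≤ x.re → x.re < a.re →
      ContinuousWithinAt (fun y => abGauge a y * φ y) (closure (halfDisk (proj a) r₀)) x := by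
    intro x h1 h2 h3
    obtain ⟨L, hL, -⟩ := abGauge_hasFDerivAt h3
    exact hL.continuousAt.continuousWithinAt.mul (hcont x (mem_closure_halfDisk h1 h2))
  have hnorm : ∀ x, ‖abGauge a x * φ x‖ = ‖φ x‖ := fun x => by
    rw [norm_mul, norm_abGauge, one_mul]
  set u0 : ℂ → ℂ := fun y => abGauge a y * φ y with hu0
  set u1 : ℂ → ℂ := fun y => abGauge a y * (-Complex.I * mg1 a φ y) with hu1
  set u2 : ℂ → ℂ := fun y => abGauge a y * (-Complex.I * mg2 a φ y) with hu2
  -- `|φ| ≤ K x₁`, by comparison on the half-square of size `d` based at the projection of `z`.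
  have decay : ∀ z : ℂ, dist z (proj a) < r + 2 * d → 0 ≤ z.re → z.re ≤ d →
      ‖φ z‖ ≤ (2 * M / d + N * d / 2) * z.re := by
    intro z hz1 hz2 hz3
    set b : ℂ := z.im * Complex.I with hb
    have hP : ∀ s t : ℝ, (b + s * 1 + t * Complex.I).re = s ∧
        (b + s * 1 + t * Complex.I).im = z.im + t := by
      intro s t; simp [hb]
    have hdist : ∀ s ∈ Icc 0 d, ∀ t ∈ Icc (-d) d,
        dist (b + s * 1 + t * Complex.I) (proj a) < r₀ := by
      intro s hs t ht
      have h1 := dist_proj_le a (b + s * 1 + t * Complex.I)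
      rw [(hP s t).1, (hP s t).2, abs_of_nonneg hs.1] at h1
      have h2 : |z.im + t - a.im| ≤ |z.im - a.im| + |t| := by
        rw [show z.im + t - a.im = (z.im - a.im) + t by ring]
        exact abs_add_le _ _
      have h3 : |t| ≤ d := abs_le.2 ht
      have h4 := abs_im_sub_le_dist_proj a z
      linarith [hs.2]
    have hzz : b + (z.re : ℂ) * 1 = z := by
      apply Complex.ext <;> simp [hb]
    have := halfSquare_cell (closure (halfDisk (proj a) r₀)) u0 u1 u2 b 1 Complex.I d M N hd0 hM0
      hN ?_ ?_ ?_ z.re ⟨hz2, hz3⟩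
    · rwa [hzz, hu0, hnorm] at this
    · rintro s hs t ht x rfl
      have g1 := hdist s hs t ht
      have g2 : 0 ≤ (b + s * 1 + t * Complex.I).re := by rw [(hP s t).1]; exact hs.1
      have g3 : (b + s * 1 + t * Complex.I).re < a.re := by
        rw [(hP s t).1]; exact hs.2.trans_lt hda
      have g4 := mem_closure_halfDisk g1 g2
      refine ⟨g4, hucont _ g1 g2 g3, ?_⟩
      simp only [hu0]
      rw [hnorm]
      exact hM _ g4
    · intro t ht
      have h1 := hdist 0 ⟨le_rfl, hd0.le⟩ t ht
      have h2 := hP 0 t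
      have h3 := hbc _ (mem_closure_halfDisk h1 h2.1.ge) h2.1
      simp only [Complex.ofReal_zero, zero_mul, add_zero] at h3
      simp only [hu0]
      rw [h3, mul_zero]
    · rintro s hs t ht x rfl
      have g1 := hdist s ⟨hs.1.le, hs.2.le⟩ t ⟨ht.1.le, ht.2.le⟩
      have g2 : 0 < (b + s * 1 + t * Complex.I).re := by rw [(hP s t).1]; exact hs.1
      have g3 : (b + s * 1 + t * Complex.I).re < a.re := by
        rw [(hP s t).1]; exact hs.2.trans hda
      obtain ⟨D0, D1, D2, E1, E2, E3⟩ := gauged_derivs g3 (hC2 _ (hgood _ g1 g2 g3))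
      refine ⟨D0, D1, D2, E1, E2, ?_⟩
      rw [E3]; exact hlap _ g1 g2 g3
  set K := 2 * M / d + N * d / 2 with hK
  have hK0 : 0 ≤ K := by positivity
  refine ⟨d / 2, by linarith, 6 * K + N * d, ?_⟩
  rintro z ⟨hz1, hz2⟩ hz3
  set l := z.re / 2 with hl
  have hl0 : 0 < l := by simp only [hl]; linarith
  have hpt : ∀ e f : ℂ, ‖e‖ = 1 → ‖f‖ = 1 → ∀ s ∈ Icc (-l) l, ∀ t ∈ Icc (-l) l,
      dist (z + s * e + t * f) (proj a) < r + 2 * d := by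
    intro e f he hf s hs t ht
    have h1 : dist (z + s * e + t * f) z ≤ |s| + |t| := by
      rw [Complex.dist_eq, show z + s * e + t * f - z = s * e + t * f by ring]
      refine (norm_add_le _ _).trans ?_
      simp [he, hf]
    have h2 := dist_triangle (z + s * e + t * f) z (proj a)
    have h3 : |s| ≤ l := abs_le.2 hs
    have h4 : |t| ≤ l := abs_le.2 ht
    simp only [hl] at h3 h4
    linarith
  have hbound : ∀ x : ℂ, dist x (proj a) < r + 2 * d → l ≤ x.re → x.re ≤ 3 * l →
      ‖φ x‖ ≤ K * (3 * l) := by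
    intro x h1 h2 h3
    refine (decay x h1 (by linarith) (by simp only [hl] at h3; linarith)).trans ?_
    exact mul_le_mul_of_nonneg_left h3 hK0
  have hfin : 2 * (K * (3 * l)) / l + N * l / 2 ≤ 6 * K + N * d := by
    have e1 : 2 * (K * (3 * l)) / l = 6 * K := by field_simp; ring
    have : N * l ≤ N * d := mul_le_mul_of_nonneg_left (by simp only [hl]; linarith) hN
    rw [e1]
    have : 0 ≤ N * d := by positivity
    linarith
  have hnm : ∀ w : ℂ, ‖abGauge a z * (-Complex.I * w)‖ = ‖w‖ := fun w => by
    simp [norm_abGauge]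
  have hcell : ∀ x : ℂ, dist x (proj a) < r + 2 * d → l ≤ x.re → x.re ≤ 3 * l →
      DifferentiableAt ℝ u0 x ∧ DifferentiableAt ℝ u1 x ∧ DifferentiableAt ℝ u2 x ∧
      fderiv ℝ u0 x 1 = u1 x ∧ fderiv ℝ u0 x Complex.I = u2 x ∧
      ‖fderiv ℝ u1 x 1 + fderiv ℝ u2 x Complex.I‖ < N ∧ ‖u0 x‖ ≤ K * (3 * l) := by
    intro x h1 h2 h3
    have g1 : dist x (proj a) < r₀ := by linarith
    have g2 : 0 < x.re := by linarith
    have g3 : x.re < a.re := by simp only [hl] at h3; linarith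
    obtain ⟨D0, D1, D2, E1, E2, E3⟩ := gauged_derivs g3 (hC2 _ (hgood _ g1 g2 g3))
    refine ⟨D0, D1, D2, E1, E2, ?_, ?_⟩
    · rw [E3]; exact hlap _ g1 g2 g3
    · simp only [hu0]; rw [hnorm]; exact hbound x h1 h2 h3
  constructor
  · have := square_gradient_cell u0 u1 u2 z 1 Complex.I l (K * (3 * l)) N hl0 (by positivity) hN
      (by
        rintro s hs t ht x rfl
        have hre : (z + s * 1 + t * Complex.I).re = z.re + s := by simp
        exact hcell _ (hpt 1 Complex.I (by simp) (by simp) s hs t ht)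
          (by rw [hre]; linarith [hs.1]) (by rw [hre]; linarith [hs.2]))
    simp only [hu1] at this
    rw [hnm] at this
    exact this.trans hfin
  · have := square_gradient_cell u0 u2 u1 z Complex.I 1 l (K * (3 * l)) N hl0 (by positivity) hN
      (by
        rintro s hs t ht x rfl
        have hre : (z + s * Complex.I + t * 1).re = z.re + t := by simp
        obtain ⟨D0, D1, D2, E1, E2, E3, E4⟩ :=
          hcell _ (hpt Complex.I 1 (by simp) (by simp) s hs t ht)
            (by rw [hre]; linarith [ht.1]) (by rw [hre]; linarith [ht.2])
        exact ⟨D0, D2, D1, E2, E1, by rw [add_comm]; exact E3, E4⟩)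
    simp only [hu2] at this
    rw [hnm] at this
    exact this.trans hfin

/-! ### Divergence theorem on the half-disk -/

/-- The half-disk together with its arc and its flat side. -/
def closedHalfDisk (c : ℂ) (r : ℝ) : Set ℂ := {x : ℂ | dist x c ≤ r ∧ 0 ≤ x.re}

lemma exp_mul_I_re_im (θ : ℝ) : (Complex.exp (θ * Complex.I)).re = Real.cos θ ∧
    (Complex.exp (θ * Complex.I)).im = Real.sin θ :=
  ⟨Complex.exp_ofReal_mul_I_re θ, Complex.exp_ofReal_mul_I_im θ⟩

lemma circleMap_re {c : ℂ} (hc : c.re = 0) (ρ θ : ℝ) : (circleMap c ρ θ).re = ρ * Real.cos θ := by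
  simp [circleMap, hc, Complex.exp_ofReal_mul_I_re]

lemma dist_circleMap (c : ℂ) (ρ θ : ℝ) : dist (circleMap c ρ θ) c = |ρ| := by
  simp [circleMap]

lemma continuous_circleMap_uncurry (c : ℂ) :
    Continuous (fun p : ℝ × ℝ => circleMap c p.1 p.2) := by
  unfold circleMap; fun_prop

lemma circleMap_mem_closedHalfDisk {c : ℂ} (hc : c.re = 0) {r ρ θ : ℝ} (hρ : ρ ∈ Icc 0 r)
    (hθ : θ ∈ Icc (-(π / 2)) (π / 2)) : circleMap c ρ θ ∈ closedHalfDisk c r := by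
  refine ⟨?_, ?_⟩
  · rw [dist_circleMap, abs_of_nonneg hρ.1]; exact hρ.2
  · rw [circleMap_re hc]; exact mul_nonneg hρ.1 (Real.cos_nonneg_of_mem_Icc hθ)

lemma circleMap_mem_halfDisk {c : ℂ} (hc : c.re = 0) {r ρ θ : ℝ} (hρ : ρ ∈ Ioo 0 r)
    (hθ : θ ∈ Ioo (-(π / 2)) (π / 2)) : circleMap c ρ θ ∈ halfDisk c r := by
  refine ⟨?_, ?_⟩
  · rw [dist_circleMap, abs_of_pos hρ.1]; exact hρ.2
  · rw [circleMap_re hc]; exact mul_pos hρ.1 (Real.cos_pos_of_mem_Ioo hθ)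

/-- Integration over the half-disk in polar coordinates. -/
lemma integral_halfDisk_polar (c : ℂ) (hc : c.re = 0) (r : ℝ) (hr : 0 < r) (D : ℂ → ℂ)
    (hD : ContinuousOn D (closedHalfDisk c r)) :
    ∫ x in halfDisk c r, D x =
      ∫ ρ in (0 : ℝ)..r, ∫ θ in (-(π / 2))..(π / 2), (ρ : ℂ) * D (circleMap c ρ θ) := by
  have hpi := Real.pi_pos
  set S : Set (ℝ × ℝ) := Ioo 0 r ×ˢ Ioo (-(π / 2)) (π / 2) with hS
  have hSt : S ⊆ polarCoord.target := by
    rintro ⟨ρ, θ⟩ ⟨h1, h2⟩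
    exact ⟨h1.1, ⟨by linarith [h2.1], by linarith [h2.2]⟩⟩
  have hcm : ContinuousOn (fun p : ℝ × ℝ => (p.1 : ℂ) * D (circleMap c p.1 p.2))
      (Icc 0 r ×ˢ Icc (-(π / 2)) (π / 2)) := by
    refine ContinuousOn.mul (by fun_prop) ?_
    exact hD.comp (continuous_circleMap_uncurry c).continuousOn
      (fun p hp => circleMap_mem_closedHalfDisk hc hp.1 hp.2)
  have hintg : IntegrableOn (fun p : ℝ × ℝ => (p.1 : ℂ) * D (circleMap c p.1 p.2)) S :=
    (hcm.integrableOn_compact (isCompact_Icc.prod isCompact_Icc)).mono_set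
      (Set.prod_mono Ioo_subset_Icc_self Ioo_subset_Icc_self)
  rw [← integral_indicator (isOpen_halfDisk c r).measurableSet,
    ← integral_add_right_eq_self _ c, ← Complex.integral_comp_polarCoord_symm]
  have heq : ∀ p ∈ polarCoord.target,
      p.1 • (halfDisk c r).indicator D (Complex.polarCoord.symm p + c) =
        S.indicator (fun p : ℝ × ℝ => (p.1 : ℂ) * D (circleMap c p.1 p.2)) p := by
    rintro ⟨ρ, θ⟩ ⟨h1, h2⟩
    simp only [mem_Ioi] at h1
    have e : Complex.polarCoord.symm (ρ, θ) + c = circleMap c ρ θ := by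
      simp [circleMap, Complex.exp_mul_I, add_comm]
    rw [e]
    by_cases hm : (ρ, θ) ∈ S
    · rw [indicator_of_mem hm, indicator_of_mem (circleMap_mem_halfDisk hc hm.1 hm.2)]
      simp
    · rw [indicator_of_notMem hm, indicator_of_notMem, smul_zero]
      intro hmem
      apply hm
      have h3 := hmem.1
      rw [dist_circleMap, abs_of_pos h1] at h3
      have h4 := hmem.2
      rw [circleMap_re hc] at h4
      have h5 : 0 < Real.cos θ := pos_of_mul_pos_right h4 h1.le
      refine ⟨⟨h1, h3⟩, ?_⟩
      by_contra hcon
      have : Real.cos θ ≤ 0 := by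
        rw [mem_Ioo, not_and_or, not_lt, not_lt] at hcon
        rcases hcon with h | h
        · rw [← Real.cos_neg]
          exact Real.cos_nonpos_of_pi_div_two_le_of_le (by simp only at h; linarith)
            (by have := h2.1; simp only at this; linarith)
        · exact Real.cos_nonpos_of_pi_div_two_le_of_le h (by linarith [h2.2])
      linarith
  rw [setIntegral_congr_fun polarCoord.open_target.measurableSet heq,
    setIntegral_indicator (isOpen_Ioo.prod isOpen_Ioo).measurableSet,
    inter_eq_self_of_subset_right hSt, hS, Measure.volume_eq_prod, setIntegral_prod _ hintg,
    intervalIntegral.integral_of_le hr.le, integral_Ioc_eq_integral_Ioo]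
  refine setIntegral_congr_fun measurableSet_Ioo fun ρ _ => ?_
  simp only
  rw [intervalIntegral.integral_of_le (by linarith), integral_Ioc_eq_integral_Ioo]

/-- Divergence theorem on a half-disk for a field vanishing on the flat side: the divergence
theorem on the rectangle `(0,r) × (−π/2,π/2)` for the field
`(ρ F·e_ρ, F·e_θ)`, whose divergence is `ρ div F`. -/
lemma halfDisk_divergence (c : ℂ) (hc : c.re = 0) (r : ℝ) (hr : 0 < r) (F1 F2 D : ℂ → ℂ)
    (hF1 : ContinuousOn F1 (closedHalfDisk c r)) (hF2 : ContinuousOn F2 (closedHalfDisk c r))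
    (hD : ContinuousOn D (closedHalfDisk c r))
    (hbc : ∀ x ∈ closedHalfDisk c r, x.re = 0 → F1 x = 0 ∧ F2 x = 0)
    (hder : ∀ x ∈ halfDisk c r, DifferentiableAt ℝ F1 x ∧ DifferentiableAt ℝ F2 x ∧
      fderiv ℝ F1 x 1 + fderiv ℝ F2 x Complex.I = D x) :
    ∫ θ in Ioo (-(π / 2)) (π / 2), (r : ℂ) * (F1 (circleMap c r θ) * (Real.cos θ : ℂ) +
      F2 (circleMap c r θ) * (Real.sin θ : ℂ)) = ∫ x in halfDisk c r, D x := by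
  classical
  have hpi := Real.pi_pos
  have hpi2 : -(π / 2) ≤ π / 2 := by linarith
  rw [integral_halfDisk_polar c hc r hr D hD]
  set f : ℝ × ℝ → ℂ := fun p => (p.1 : ℂ) * (F1 (circleMap c p.1 p.2) * (Real.cos p.2 : ℂ) +
      F2 (circleMap c p.1 p.2) * (Real.sin p.2 : ℂ)) with hf
  set g : ℝ × ℝ → ℂ := fun p => -F1 (circleMap c p.1 p.2) * (Real.sin p.2 : ℂ) +
      F2 (circleMap c p.1 p.2) * (Real.cos p.2 : ℂ) with hg
  set R : Set (ℝ × ℝ) := Ioo 0 r ×ˢ Ioo (-(π / 2)) (π / 2) with hR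
  set f' : ℝ × ℝ → ℝ × ℝ →L[ℝ] ℂ := fun p => if p ∈ R then fderiv ℝ f p else
    (ContinuousLinearMap.fst ℝ ℝ ℝ).smulRight ((p.1 : ℂ) * D (circleMap c p.1 p.2)) with hf'
  set g' : ℝ × ℝ → ℝ × ℝ →L[ℝ] ℂ := fun p => if p ∈ R then fderiv ℝ g p else 0 with hg'
  have hcont1 : ContinuousOn (fun p : ℝ × ℝ => F1 (circleMap c p.1 p.2))
      (Icc 0 r ×ˢ Icc (-(π / 2)) (π / 2)) :=
    hF1.comp (continuous_circleMap_uncurry c).continuousOn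
      (fun p hp => circleMap_mem_closedHalfDisk hc hp.1 hp.2)
  have hcont2 : ContinuousOn (fun p : ℝ × ℝ => F2 (circleMap c p.1 p.2))
      (Icc 0 r ×ˢ Icc (-(π / 2)) (π / 2)) :=
    hF2.comp (continuous_circleMap_uncurry c).continuousOn
      (fun p hp => circleMap_mem_closedHalfDisk hc hp.1 hp.2)
  have hcontD : ContinuousOn (fun p : ℝ × ℝ => D (circleMap c p.1 p.2))
      (Icc 0 r ×ˢ Icc (-(π / 2)) (π / 2)) :=
    hD.comp (continuous_circleMap_uncurry c).continuousOn
      (fun p hp => circleMap_mem_closedHalfDisk hc hp.1 hp.2)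
  have hcos : Continuous (fun p : ℝ × ℝ => (Real.cos p.2 : ℂ)) :=
    Complex.continuous_ofReal.comp (Real.continuous_cos.comp continuous_snd)
  have hsin : Continuous (fun p : ℝ × ℝ => (Real.sin p.2 : ℂ)) :=
    Complex.continuous_ofReal.comp (Real.continuous_sin.comp continuous_snd)
  have hfst : Continuous (fun p : ℝ × ℝ => (p.1 : ℂ)) :=
    Complex.continuous_ofReal.comp continuous_fst
  have hXr : ∀ s y : ℝ, HasDerivAt (fun s => circleMap c s y) (Complex.exp (y * Complex.I)) s := by
    intro s y
    unfold circleMap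
    simpa using ((hasDerivAt_id s).ofReal_comp.mul_const (Complex.exp (y * Complex.I))).const_add c
  have hXd : Differentiable ℝ (fun p : ℝ × ℝ => circleMap c p.1 p.2) := by
    unfold circleMap
    have h1 : Differentiable ℝ (fun p : ℝ × ℝ => (p.1 : ℂ)) :=
      Complex.ofRealCLM.differentiable.comp differentiable_fst
    have h2 : Differentiable ℝ (fun p : ℝ × ℝ => (p.2 : ℂ)) :=
      Complex.ofRealCLM.differentiable.comp differentiable_snd
    exact (h1.mul (h2.mul_const _).cexp).const_add c
  have hdiff : ∀ p ∈ R, DifferentiableAt ℝ f p ∧ DifferentiableAt ℝ g p := by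
    rintro ⟨ρ, θ⟩ ⟨h1, h2⟩
    obtain ⟨d1, d2, -⟩ := hder _ (circleMap_mem_halfDisk hc h1 h2)
    have k1 : DifferentiableAt ℝ (fun p : ℝ × ℝ => F1 (circleMap c p.1 p.2)) (ρ, θ) :=
      DifferentiableAt.comp (ρ, θ) (f := fun p : ℝ × ℝ => circleMap c p.1 p.2) d1
        (hXd.differentiableAt)
    have k2 : DifferentiableAt ℝ (fun p : ℝ × ℝ => F2 (circleMap c p.1 p.2)) (ρ, θ) :=
      DifferentiableAt.comp (ρ, θ) (f := fun p : ℝ × ℝ => circleMap c p.1 p.2) d2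
        (hXd.differentiableAt)
    have k3 : DifferentiableAt ℝ (fun p : ℝ × ℝ => (p.1 : ℂ)) (ρ, θ) :=
      (Complex.ofRealCLM.differentiable.comp differentiable_fst).differentiableAt
    have k4 : DifferentiableAt ℝ (fun p : ℝ × ℝ => (Real.cos p.2 : ℂ)) (ρ, θ) :=
      (Complex.ofRealCLM.differentiable.comp
        (Real.differentiable_cos.comp differentiable_snd)).differentiableAt
    have k5 : DifferentiableAt ℝ (fun p : ℝ × ℝ => (Real.sin p.2 : ℂ)) (ρ, θ) :=
      (Complex.ofRealCLM.differentiable.comp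
        (Real.differentiable_sin.comp differentiable_snd)).differentiableAt
    exact ⟨k3.mul ((k1.mul k4).add (k2.mul k5)), (k1.neg.mul k5).add (k2.mul k4)⟩
  have hdiv : ∀ p : ℝ × ℝ, f' p (1, 0) + g' p (0, 1) = (p.1 : ℂ) * D (circleMap c p.1 p.2) := by
    rintro ⟨ρ, θ⟩
    by_cases hp : (ρ, θ) ∈ R
    · simp only [hf', hg', if_pos hp]
      obtain ⟨df, dg⟩ := hdiff _ hp
      obtain ⟨h1, h2⟩ := hp
      obtain ⟨d1, d2, hdD⟩ := hder _ (circleMap_mem_halfDisk hc h1 h2)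
      have c1 : HasDerivAt (fun s : ℝ => (s, θ)) ((1 : ℝ), (0 : ℝ)) ρ :=
        (hasDerivAt_id ρ).prodMk (hasDerivAt_const ρ θ)
      have c2 : HasDerivAt (fun s : ℝ => (ρ, s)) ((0 : ℝ), (1 : ℝ)) θ :=
        (hasDerivAt_const θ ρ).prodMk (hasDerivAt_id θ)
      have e1 := df.hasFDerivAt.comp_hasDerivAt ρ c1
      have e2 := dg.hasFDerivAt.comp_hasDerivAt θ c2
      have r1 := d1.hasFDerivAt.comp_hasDerivAt ρ (hXr ρ θ)
      have r2 := d2.hasFDerivAt.comp_hasDerivAt ρ (hXr ρ θ)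
      have t1 := d1.hasFDerivAt.comp_hasDerivAt θ (hasDerivAt_circleMap c ρ θ)
      have t2 := d2.hasFDerivAt.comp_hasDerivAt θ (hasDerivAt_circleMap c ρ θ)
      have e1' := ((hasDerivAt_id ρ).ofReal_comp).mul
        ((r1.mul_const (Real.cos θ : ℂ)).add (r2.mul_const (Real.sin θ : ℂ)))
      have e2' := (t1.neg.mul (Real.hasDerivAt_sin θ).ofReal_comp).add
        (t2.mul (Real.hasDerivAt_cos θ).ofReal_comp)
      rw [e1.unique e1', e2.unique e2']
      have q1 := clm_apply_eq (fderiv ℝ F1 (circleMap c ρ θ)) (Complex.exp (θ * Complex.I))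
      have q2 := clm_apply_eq (fderiv ℝ F2 (circleMap c ρ θ)) (Complex.exp (θ * Complex.I))
      have q3 := clm_apply_eq (fderiv ℝ F1 (circleMap c ρ θ)) (circleMap 0 ρ θ * Complex.I)
      have q4 := clm_apply_eq (fderiv ℝ F2 (circleMap c ρ θ)) (circleMap 0 ρ θ * Complex.I)
      have i1 : (circleMap 0 ρ θ * Complex.I).re = -(ρ * Real.sin θ) := by
        simp [circleMap, Complex.exp_ofReal_mul_I_im]
      have i2 : (circleMap 0 ρ θ * Complex.I).im = ρ * Real.cos θ := by
        simp [circleMap, Complex.exp_ofReal_mul_I_re]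
      rw [(exp_mul_I_re_im θ).1, (exp_mul_I_re_im θ).2] at q1 q2
      rw [i1, i2] at q3 q4
      have hsc : (Real.sin θ : ℂ) ^ 2 + (Real.cos θ : ℂ) ^ 2 = 1 := by
        exact_mod_cast Real.sin_sq_add_cos_sq θ
      simp only [q1, q2, q3, q4, Function.comp_apply, id]
      rw [← hdD]
      push_cast at hsc ⊢
      simp only [Pi.neg_apply, Pi.add_apply, Function.comp_apply]
      linear_combination ((ρ : ℂ) * (fderiv ℝ F1 (circleMap c ρ θ) 1 +
        fderiv ℝ F2 (circleMap c ρ θ) Complex.I)) * hsc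
    · simp only [hf', hg', if_neg hp]
      simp
  have main := integral2_divergence_prod_of_hasFDerivAt_off_countable f g f' g' 0 (-(π / 2)) r
    (π / 2) ∅ countable_empty ?_ ?_ ?_ ?_ ?_
  · simp only [hdiv] at main
    rw [main]
    have z1 : ∀ x ∈ uIcc 0 r, g (x, π / 2) = 0 := by
      intro x hx
      rw [uIcc_of_le hr.le] at hx
      obtain ⟨b1, b2⟩ := hbc _ (circleMap_mem_closedHalfDisk hc hx ⟨hpi2, le_rfl⟩)
        (by rw [circleMap_re hc]; simp)
      simp [hg, b1, b2]
    have z2 : ∀ x ∈ uIcc 0 r, g (x, -(π / 2)) = 0 := by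
      intro x hx
      rw [uIcc_of_le hr.le] at hx
      obtain ⟨b1, b2⟩ := hbc _ (circleMap_mem_closedHalfDisk hc hx ⟨le_rfl, hpi2⟩)
        (by rw [circleMap_re hc]; simp)
      simp only [hg, b1, b2]; simp
    rw [intervalIntegral.integral_congr (g := fun _ => (0 : ℂ)) z1,
      intervalIntegral.integral_congr (g := fun _ => (0 : ℂ)) z2,
      intervalIntegral.integral_of_le hpi2, integral_Ioc_eq_integral_Ioo]
    simp [hf]
  · rw [uIcc_of_le hr.le, uIcc_of_le hpi2]
    exact hfst.continuousOn.mul ((hcont1.mul hcos.continuousOn).add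
      (hcont2.mul hsin.continuousOn))
  · rw [uIcc_of_le hr.le, uIcc_of_le hpi2]
    exact (hcont1.neg.mul hsin.continuousOn).add (hcont2.mul hcos.continuousOn)
  · intro p hp
    rw [min_eq_left hr.le, max_eq_right hr.le, min_eq_left hpi2, max_eq_right hpi2] at hp
    rw [show f' p = fderiv ℝ f p from if_pos hp.1]
    exact (hdiff p hp.1).1.hasFDerivAt
  · intro p hp
    rw [min_eq_left hr.le, max_eq_right hr.le, min_eq_left hpi2, max_eq_right hpi2] at hp
    rw [show g' p = fderiv ℝ g p from if_pos hp.1]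
    exact (hdiff p hp.1).2.hasFDerivAt
  · simp only [hdiv]
    rw [uIcc_of_le hr.le, uIcc_of_le hpi2]
    exact (hfst.continuousOn.mul hcontD).integrableOn_compact
      (isCompact_Icc.prod isCompact_Icc)

/-! ### Truncation of the flux near the zero set -/

/-- A smooth cutoff, `0` on `(-∞, 1]` and `1` on `[2, ∞)`. -/
def cutoff (x : ℝ) : ℝ := Real.smoothTransition (x - 1)

lemma cutoff_contDiff : ContDiff ℝ 2 cutoff := by
  unfold cutoff
  exact Real.smoothTransition.contDiff.comp (contDiff_id.sub contDiff_const)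

lemma cutoff_zero {x : ℝ} (hx : x ≤ 1) : cutoff x = 0 :=
  Real.smoothTransition.zero_of_nonpos (by linarith)

lemma cutoff_one {x : ℝ} (hx : 2 ≤ x) : cutoff x = 1 :=
  Real.smoothTransition.one_of_one_le (by linarith)

lemma cutoff_abs_le (x : ℝ) : |cutoff x| ≤ 1 := by
  unfold cutoff
  rw [abs_of_nonneg (Real.smoothTransition.nonneg _)]
  exact Real.smoothTransition.le_one _

lemma continuous_deriv_cutoff : Continuous (deriv cutoff) :=
  cutoff_contDiff.continuous_deriv (by norm_num)

lemma deriv_cutoff_zero_of_lt {x : ℝ} (hx : x < 1) : deriv cutoff x = 0 := by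
  have : cutoff =ᶠ[nhds x] fun _ => 0 :=
    (eventually_lt_nhds hx).mono fun y hy => cutoff_zero hy.le
  rw [this.deriv_eq]; simp

lemma deriv_cutoff_zero_of_gt {x : ℝ} (hx : 2 < x) : deriv cutoff x = 0 := by
  have : cutoff =ᶠ[nhds x] fun _ => 1 :=
    (eventually_gt_nhds hx).mono fun y hy => cutoff_one hy.le
  rw [this.deriv_eq]; simp

/-- The quantity `x T'(x)` is bounded; this makes the extra term in `fluxDiv` dominated by
`|(i∇+A)φ|²` uniformly in `n`. -/
lemma exists_bound_mul_deriv_cutoff : ∃ C : ℝ, 0 ≤ C ∧ ∀ x, |x * deriv cutoff x| ≤ C := by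
  obtain ⟨C, hC⟩ := (isCompact_Icc (a := (1 : ℝ)) (b := 2)).exists_bound_of_continuousOn
    (f := fun x => x * deriv cutoff x) (continuous_id.mul continuous_deriv_cutoff).continuousOn
  refine ⟨max C 0, le_max_right _ _, fun x => ?_⟩
  by_cases hx : x ∈ Icc (1 : ℝ) 2
  · exact (hC x hx).trans (le_max_left _ _)
  · rw [mem_Icc, not_and_or, not_le, not_le] at hx
    rcases hx with h | h
    · simp [deriv_cutoff_zero_of_lt h]
    · simp [deriv_cutoff_zero_of_gt h]

/-- One term of the product rule behind `div_flux_eq`. -/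
lemma fderiv_flux (G φ : ℂ → ℂ) (x v : ℂ) (n : ℝ) (hG : DifferentiableAt ℝ G x)
    (hφ : DifferentiableAt ℝ φ x) :
    DifferentiableAt ℝ (fun y => -Complex.I * G y * (starRingEnd ℂ) (φ y) *
      (cutoff (n * ‖φ y‖ ^ 2) : ℂ)) x ∧
    fderiv ℝ (fun y => -Complex.I * G y * (starRingEnd ℂ) (φ y) *
      (cutoff (n * ‖φ y‖ ^ 2) : ℂ)) x v =
      (-Complex.I * fderiv ℝ G x v * (starRingEnd ℂ) (φ x) -
        Complex.I * G x * (starRingEnd ℂ) (fderiv ℝ φ x v)) * (cutoff (n * ‖φ x‖ ^ 2) : ℂ) +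
      -Complex.I * G x * (starRingEnd ℂ) (φ x) * ((deriv cutoff (n * ‖φ x‖ ^ 2) *
        (n * (2 * ((starRingEnd ℂ) (φ x) * fderiv ℝ φ x v).re)) : ℝ) : ℂ) := by
  have h1 := hG.hasFDerivAt.const_mul (-Complex.I)
  have h2 : HasFDerivAt (fun y => (starRingEnd ℂ) (φ y))
      ((Complex.conjCLE : ℂ →L[ℝ] ℂ).comp (fderiv ℝ φ x)) x :=
    (Complex.conjCLE : ℂ →L[ℝ] ℂ).hasFDerivAt.comp x hφ.hasFDerivAt
  have h3 : HasFDerivAt (fun y => n * ‖φ y‖ ^ 2) _ x := (hφ.hasFDerivAt.norm_sq).const_mul n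
  have h4 : HasDerivAt cutoff (deriv cutoff (n * ‖φ x‖ ^ 2)) (n * ‖φ x‖ ^ 2) :=
    (cutoff_contDiff.differentiable (by norm_num)).differentiableAt.hasDerivAt
  have h5 := h4.comp_hasFDerivAt x h3
  have h6 : HasFDerivAt (fun y => (cutoff (n * ‖φ y‖ ^ 2) : ℂ)) _ x :=
    Complex.ofRealCLM.hasFDerivAt.comp x h5
  have h7 := (h1.mul h2).mul h6
  refine ⟨h7.differentiableAt, ?_⟩
  have e := h7.fderiv
  rw [show (fun y => -Complex.I * G y * (starRingEnd ℂ) (φ y) *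
      (cutoff (n * ‖φ y‖ ^ 2) : ℂ)) = ((fun y => -Complex.I * G y) *
      (fun y => (starRingEnd ℂ) (φ y))) * (fun y => (cutoff (n * ‖φ y‖ ^ 2) : ℂ)) from rfl, e]
  simp [Complex.inner]
  ring

/-- The divergence of the truncated flux `−i T(n|φ|²) conj(φ) (i∇+A)φ`, with `T` the function
`cutoff`, where `(i∇+A)²φ = m φ`; see `div_flux_eq`. -/
def fluxDiv (a : ℂ) (φ : ℂ → ℂ) (m : ℂ → ℝ) (n : ℝ) (x : ℂ) : ℂ :=
  ((cutoff (n * ‖φ x‖ ^ 2) * (mgSq a φ x - m x * ‖φ x‖ ^ 2) : ℝ) : ℂ) +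
    (deriv cutoff (n * ‖φ x‖ ^ 2) * n : ℝ) *
      (-Complex.I * mg1 a φ x * (starRingEnd ℂ) (φ x) *
        (2 * ((starRingEnd ℂ) (φ x) * (-Complex.I * mg1 a φ x)).re : ℝ) +
      -Complex.I * mg2 a φ x * (starRingEnd ℂ) (φ x) *
        (2 * ((starRingEnd ℂ) (φ x) * (-Complex.I * mg2 a φ x)).re : ℝ))

/-- The potential does not contribute to `∇|φ|²`. -/
lemma re_conj_mul_grad (z w : ℂ) (A : ℝ) :
    ((starRingEnd ℂ) z * (-Complex.I * w + Complex.I * A * z)).re =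
      ((starRingEnd ℂ) z * (-Complex.I * w)).re := by
  simp; ring

lemma ofReal_norm_sq (z : ℂ) : ((‖z‖ ^ 2 : ℝ) : ℂ) = z * (starRingEnd ℂ) z := by
  rw [Complex.mul_conj, Complex.normSq_eq_norm_sq]

lemma div_flux_eq {a x : ℂ} {φ : ℂ → ℂ} (m : ℂ → ℝ) (n : ℝ) (hx : x ≠ a)
    (hφ : ContDiffAt ℝ 2 φ x) (heq : magLap a φ x = (m x : ℂ) * φ x) :
    fderiv ℝ (fun y => -Complex.I * mg1 a φ y * (starRingEnd ℂ) (φ y) *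
      (cutoff (n * ‖φ y‖ ^ 2) : ℂ)) x 1 +
    fderiv ℝ (fun y => -Complex.I * mg2 a φ y * (starRingEnd ℂ) (φ y) *
      (cutoff (n * ‖φ y‖ ^ 2) : ℂ)) x Complex.I = fluxDiv a φ m n x := by
  have hφd : DifferentiableAt ℝ φ x := hφ.differentiableAt (by norm_num)
  rw [(fderiv_flux _ φ x 1 n ((mg1_contDiffAt hx hφ).differentiableAt (by norm_num)) hφd).2,
    (fderiv_flux _ φ x Complex.I n
      ((mg2_contDiffAt hx hφ).differentiableAt (by norm_num)) hφd).2]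
  have hdiv := magLap_eq_div hx hφ
  rw [heq] at hdiv
  rw [pd1_eq_mg1 a φ x, pd2_eq_mg2 a φ x, re_conj_mul_grad, re_conj_mul_grad]
  unfold fluxDiv mgSq
  have e1 := ofReal_norm_sq (mg1 a φ x)
  have e2 := ofReal_norm_sq (mg2 a φ x)
  have e3 := ofReal_norm_sq (φ x)
  push_cast at e1 e2 e3 ⊢
  rw [e1, e2, e3]
  simp only [map_add, map_mul, map_neg, Complex.conj_I, Complex.conj_ofReal]
  linear_combination ((starRingEnd ℂ) (φ x) * (cutoff (n * ‖φ x‖ ^ 2) : ℂ)) * hdiv +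
    (cutoff (n * ‖φ x‖ ^ 2) : ℂ) * ((starRingEnd ℂ) (φ x) *
      ((abPot1 a x : ℂ) * mg1 a φ x + (abPot2 a x : ℂ) * mg2 a φ x) -
      (mg1 a φ x * (starRingEnd ℂ) (mg1 a φ x) + mg2 a φ x * (starRingEnd ℂ) (mg2 a φ x))) *
      Complex.I_sq

/-- Almost everywhere on its zero set, a differentiable function has zero derivative. -/
lemma ae_fderiv_eq_zero_of_eq_zero {φ : ℂ → ℂ} {s : Set ℂ} (hs : MeasurableSet s)
    (hd : ∀ x ∈ s, DifferentiableAt ℝ φ x) (h0 : ∀ x ∈ s, φ x = 0) :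
    ∀ᵐ x ∂volume.restrict s, fderiv ℝ φ x = 0 := by
  have h : ApproximatesLinearOn φ (0 : ℂ →L[ℝ] ℂ) s 0 := by
    intro x hx y hy
    simp [h0 x hx, h0 y hy]
  filter_upwards [h.norm_fderiv_sub_le volume hs (fun x => fderiv ℝ φ x)
    (fun x hx => (hd x hx).hasFDerivAt.hasFDerivWithinAt)] with x hx
  simpa using hx

/-- Near a zero of `φ` the argument `n|φ|²` of the cutoff is below the threshold `1`, so the
truncated flux and its divergence vanish there, whether or not `φ` is differentiable. -/
lemma eventually_small {φ : ℂ → ℂ} {s : Set ℂ} {x : ℂ} (hφ : ContinuousWithinAt φ s x)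
    (h0 : φ x = 0) (n : ℝ) : ∀ᶠ y in nhdsWithin x s, n * ‖φ y‖ ^ 2 < 1 := by
  have h : ContinuousWithinAt (fun y => n * ‖φ y‖ ^ 2) s x :=
    continuousWithinAt_const.mul (hφ.norm.pow 2)
  exact h.eventually_lt_const (by simp [h0])

lemma fluxDiv_eq_zero {a x : ℂ} {φ : ℂ → ℂ} {m : ℂ → ℝ} {n : ℝ} (h : n * ‖φ x‖ ^ 2 < 1) :
    fluxDiv a φ m n x = 0 := by
  simp [fluxDiv, cutoff_zero h.le, deriv_cutoff_zero_of_lt h]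

lemma fluxDiv_continuousAt {a x : ℂ} {φ : ℂ → ℂ} {m : ℂ → ℝ} (hm : Continuous m) (n : ℝ)
    (hx : x ≠ a) (hφ : ContDiffAt ℝ 2 φ x) : ContinuousAt (fluxDiv a φ m n) x := by
  have c1 := (mg1_contDiffAt hx hφ).continuousAt
  have c2 := (mg2_contDiffAt hx hφ).continuousAt
  have c3 := hφ.continuousAt
  have c4 : ContinuousAt (fun y => cutoff (n * ‖φ y‖ ^ 2)) x :=
    ContinuousAt.comp (g := cutoff) cutoff_contDiff.continuous.continuousAt (by fun_prop)
  have c5 : ContinuousAt (fun y => deriv cutoff (n * ‖φ y‖ ^ 2)) x :=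
    ContinuousAt.comp (g := deriv cutoff) continuous_deriv_cutoff.continuousAt (by fun_prop)
  have c6 : ContinuousAt (fun y => (starRingEnd ℂ) (φ y)) x :=
    Complex.continuous_conj.continuousAt.comp c3
  have c7 : ContinuousAt (mgSq a φ) x := (c1.norm.pow 2).add (c2.norm.pow 2)
  have c8 := hm.continuousAt (x := x)
  unfold fluxDiv
  refine ContinuousAt.add ?_ (ContinuousAt.mul ?_ (ContinuousAt.add ?_ ?_))
  · exact Complex.continuous_ofReal.continuousAt.comp
      (c4.mul (c7.sub (c8.mul (c3.norm.pow 2))))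
  · exact Complex.continuous_ofReal.continuousAt.comp (c5.mul continuousAt_const)
  · exact ((continuousAt_const.mul c1).mul c6).mul (Complex.continuous_ofReal.continuousAt.comp
      (continuousAt_const.mul (Complex.continuous_re.continuousAt.comp
        (c6.mul (continuousAt_const.mul c1)))))
  · exact ((continuousAt_const.mul c2).mul c6).mul (Complex.continuous_ofReal.continuousAt.comp
      (continuousAt_const.mul (Complex.continuous_re.continuousAt.comp
        (c6.mul (continuousAt_const.mul c2)))))

/-- Bound uniform in `n`, used as the dominating function in `energy_identity`. -/
lemma norm_fluxDiv_le {C : ℝ} (hC : ∀ x, |x * deriv cutoff x| ≤ C) (a x : ℂ) (φ : ℂ → ℂ)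
    (m : ℂ → ℝ) (n : ℝ) :
    ‖fluxDiv a φ m n x‖ ≤ (1 + 2 * C) * mgSq a φ x + |m x| * ‖φ x‖ ^ 2 := by
  have hterm : ∀ w : ℂ, ‖-Complex.I * w * (starRingEnd ℂ) (φ x) *
      (2 * ((starRingEnd ℂ) (φ x) * (-Complex.I * w)).re : ℝ)‖ ≤ 2 * ‖φ x‖ ^ 2 * ‖w‖ ^ 2 := by
    intro w
    have h1 := Complex.abs_re_le_norm ((starRingEnd ℂ) (φ x) * (-Complex.I * w))
    rw [norm_mul, norm_mul, norm_mul, Complex.norm_real, Real.norm_eq_abs, abs_mul]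
    simp only [norm_mul, norm_neg, Complex.norm_I, RCLike.norm_conj, one_mul] at h1 ⊢
    rw [abs_of_pos (by norm_num : (0 : ℝ) < 2)]
    have : ‖w‖ * ‖φ x‖ * (2 * |((starRingEnd ℂ) (φ x) * (-Complex.I * w)).re|) ≤
      ‖w‖ * ‖φ x‖ * (2 * (‖φ x‖ * ‖w‖)) := by gcongr
    nlinarith [this]
  have hmg : 0 ≤ mgSq a φ x := by unfold mgSq; positivity
  unfold fluxDiv
  refine (norm_add_le _ _).trans ?_
  have h1 : ‖((cutoff (n * ‖φ x‖ ^ 2) * (mgSq a φ x - m x * ‖φ x‖ ^ 2) : ℝ) : ℂ)‖ ≤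
      mgSq a φ x + |m x| * ‖φ x‖ ^ 2 := by
    rw [Complex.norm_real, Real.norm_eq_abs, abs_mul]
    calc _ ≤ 1 * |mgSq a φ x - m x * ‖φ x‖ ^ 2| := by
          gcongr; exact cutoff_abs_le _
      _ ≤ |mgSq a φ x| + |m x * ‖φ x‖ ^ 2| := by rw [one_mul]; exact abs_sub _ _
      _ = _ := by rw [abs_of_nonneg hmg, abs_mul, abs_of_nonneg (by positivity : 0 ≤ ‖φ x‖ ^ 2)]
  have h2 : ∀ z w : ℂ, ‖z‖ ≤ 2 * ‖φ x‖ ^ 2 * ‖mg1 a φ x‖ ^ 2 →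
      ‖w‖ ≤ 2 * ‖φ x‖ ^ 2 * ‖mg2 a φ x‖ ^ 2 →
      ‖((deriv cutoff (n * ‖φ x‖ ^ 2) * n : ℝ) : ℂ) * (z + w)‖ ≤ 2 * C * mgSq a φ x := by
    intro z w hz hw
    rw [norm_mul, Complex.norm_real, Real.norm_eq_abs]
    have hzw : ‖z + w‖ ≤ 2 * ‖φ x‖ ^ 2 * mgSq a φ x := by
      refine (norm_add_le _ _).trans ?_
      unfold mgSq; linarith
    calc _ ≤ |deriv cutoff (n * ‖φ x‖ ^ 2) * n| * (2 * ‖φ x‖ ^ 2 * mgSq a φ x) := by gcongr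
      _ = 2 * |n * ‖φ x‖ ^ 2 * deriv cutoff (n * ‖φ x‖ ^ 2)| * mgSq a φ x := by
          rw [abs_mul, abs_mul, abs_mul, abs_of_nonneg (by positivity : 0 ≤ ‖φ x‖ ^ 2)]; ring
      _ ≤ _ := by gcongr; exact hC _
  have h3 := h2 _ _ (hterm (mg1 a φ x)) (hterm (mg2 a φ x))
  linarith

/-! ### The energy identity -/

lemma isCompact_closedHalfDisk (c : ℂ) (r : ℝ) : IsCompact (closedHalfDisk c r) := by
  have : closedHalfDisk c r = Metric.closedBall c r ∩ {x : ℂ | 0 ≤ x.re} := rfl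
  rw [this]
  exact (isCompact_closedBall c r).inter_right
    (isClosed_le continuous_const Complex.continuous_re)

lemma halfDisk_subset_closedHalfDisk (c : ℂ) (r : ℝ) : halfDisk c r ⊆ closedHalfDisk c r :=
  fun _ hx => ⟨hx.1.le, hx.2.le⟩

/-- The energy identity for the truncated flux. The truncation vanishes near the pole `a` and near
the flat side, where `φ = 0`, so the classical divergence theorem applies. -/
lemma truncated_identity (a : ℂ) (ha : 0 < a.re) (r₀ : ℝ) (φ : ℂ → ℂ) (m : ℂ → ℝ)
    (hm : Continuous m)
    (hcont : ContinuousOn φ (closure (halfDisk (proj a) r₀)))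
    (hbc : ∀ x ∈ closure (halfDisk (proj a) r₀), x.re = 0 → φ x = 0)
    (hC2 : ∀ x ∈ halfDisk (proj a) r₀ \ {a}, ContDiffAt ℝ 2 φ x)
    (heq : ∀ x ∈ halfDisk (proj a) r₀ \ {a}, magLap a φ x = (m x : ℂ) * φ x)
    (hφa : φ a = 0) (r : ℝ) (hr : 0 < r) (hr0 : r < r₀) (n : ℝ) :
    ContinuousOn (fluxDiv a φ m n) (closedHalfDisk (proj a) r) ∧
    ∫ θ in Ioo (-(π / 2)) (π / 2), (r : ℂ) *
      (-Complex.I * mg1 a φ (circleMap (proj a) r θ) *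
          (starRingEnd ℂ) (φ (circleMap (proj a) r θ)) *
          (cutoff (n * ‖φ (circleMap (proj a) r θ)‖ ^ 2) : ℂ) * (Real.cos θ : ℂ) +
        -Complex.I * mg2 a φ (circleMap (proj a) r θ) *
          (starRingEnd ℂ) (φ (circleMap (proj a) r θ)) *
          (cutoff (n * ‖φ (circleMap (proj a) r θ)‖ ^ 2) : ℂ) * (Real.sin θ : ℂ)) =
      ∫ x in halfDisk (proj a) r, fluxDiv a φ m n x := by
  have hsub : closedHalfDisk (proj a) r ⊆ closure (halfDisk (proj a) r₀) := fun x hx =>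
    mem_closure_halfDisk (hx.1.trans_lt hr0) hx.2
  have hmem : ∀ x ∈ closedHalfDisk (proj a) r, φ x ≠ 0 → x ∈ halfDisk (proj a) r₀ \ {a} := by
    intro x hx h0
    refine ⟨⟨hx.1.trans_lt hr0, ?_⟩, ?_⟩
    · rcases hx.2.lt_or_eq with h | h
      · exact h
      · exact absurd (hbc x (hsub hx) h.symm) h0
    · rintro rfl; exact h0 hφa
  have hcw : ∀ x ∈ closedHalfDisk (proj a) r,
      ContinuousWithinAt φ (closedHalfDisk (proj a) r) x := hcont.mono hsub
  have hca : ∀ x ∈ halfDisk (proj a) r, ContinuousAt φ x := by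
    intro x hx
    exact hcont.continuousAt (mem_of_superset ((isOpen_halfDisk (proj a) r).mem_nhds hx)
      ((halfDisk_subset_closedHalfDisk _ _).trans hsub))
  have key : ∀ (F : ℂ → ℂ), (∀ x, n * ‖φ x‖ ^ 2 < 1 → F x = 0) →
      (∀ x ∈ halfDisk (proj a) r₀ \ {a}, ContinuousAt F x) →
      ContinuousOn F (closedHalfDisk (proj a) r) := by
    intro F hF1 hF2 x hx
    by_cases h0 : φ x = 0
    · have hev := eventually_small (hcw x hx) h0 n
      have : F =ᶠ[nhdsWithin x (closedHalfDisk (proj a) r)] fun _ => 0 :=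
        hev.mono fun y hy => hF1 y hy
      exact continuousWithinAt_const.congr_of_eventuallyEq this
        (hF1 x (by simp [h0]))
    · exact (hF2 x (hmem x hx h0)).continuousWithinAt
  have hflux0 : ∀ (G : ℂ → ℂ) x, n * ‖φ x‖ ^ 2 < 1 → -Complex.I * G x * (starRingEnd ℂ) (φ x) *
      (cutoff (n * ‖φ x‖ ^ 2) : ℂ) = 0 := by
    intro G x hx; simp [cutoff_zero hx.le]
  have hd1 : ∀ x ∈ halfDisk (proj a) r₀ \ {a}, DifferentiableAt ℝ (mg1 a φ) x := fun x hx =>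
    (mg1_contDiffAt hx.2 (hC2 x hx)).differentiableAt (by norm_num)
  have hd2 : ∀ x ∈ halfDisk (proj a) r₀ \ {a}, DifferentiableAt ℝ (mg2 a φ) x := fun x hx =>
    (mg2_contDiffAt hx.2 (hC2 x hx)).differentiableAt (by norm_num)
  have hd0 : ∀ x ∈ halfDisk (proj a) r₀ \ {a}, DifferentiableAt ℝ φ x := fun x hx =>
    (hC2 x hx).differentiableAt (by norm_num)
  have hDc : ContinuousOn (fluxDiv a φ m n) (closedHalfDisk (proj a) r) :=
    key _ (fun x hx => fluxDiv_eq_zero hx)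
      (fun x hx => fluxDiv_continuousAt hm n hx.2 (hC2 x hx))
  refine ⟨hDc, ?_⟩
  refine halfDisk_divergence (proj a) (proj_re a) r hr
    (fun y => -Complex.I * mg1 a φ y * (starRingEnd ℂ) (φ y) * (cutoff (n * ‖φ y‖ ^ 2) : ℂ))
    (fun y => -Complex.I * mg2 a φ y * (starRingEnd ℂ) (φ y) * (cutoff (n * ‖φ y‖ ^ 2) : ℂ))
    (fluxDiv a φ m n) ?_ ?_ hDc ?_ ?_
  · exact key _ (hflux0 (mg1 a φ)) fun x hx =>
      (fderiv_flux _ φ x 1 n (hd1 x hx) (hd0 x hx)).1.continuousAt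
  · exact key _ (hflux0 (mg2 a φ)) fun x hx =>
      (fderiv_flux _ φ x 1 n (hd2 x hx) (hd0 x hx)).1.continuousAt
  · intro x hx hx0
    simp [hbc x (hsub hx) hx0]
  · intro x hx
    by_cases h0 : φ x = 0
    · have hev : ∀ᶠ y in nhds x, n * ‖φ y‖ ^ 2 < 1 := by
        have := eventually_small (hca x hx).continuousWithinAt h0 n (s := univ)
        rwa [nhdsWithin_univ] at this
      have z : ∀ G : ℂ → ℂ, (fun y => -Complex.I * G y * (starRingEnd ℂ) (φ y) *
          (cutoff (n * ‖φ y‖ ^ 2) : ℂ)) =ᶠ[nhds x] fun _ => 0 :=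
        fun G => hev.mono fun y hy => hflux0 G y hy
      refine ⟨(differentiableAt_const (0 : ℂ)).congr_of_eventuallyEq (z _),
        (differentiableAt_const (0 : ℂ)).congr_of_eventuallyEq (z _), ?_⟩
      rw [(z (mg1 a φ)).fderiv_eq, (z (mg2 a φ)).fderiv_eq, fluxDiv_eq_zero (by simp [h0])]
      simp
    · have hx' := hmem x (halfDisk_subset_closedHalfDisk _ _ hx) h0
      exact ⟨(fderiv_flux _ φ x 1 n (hd1 x hx') (hd0 x hx')).1,
        (fderiv_flux _ φ x 1 n (hd2 x hx') (hd0 x hx')).1,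
        div_flux_eq m n hx'.2 (hC2 x hx') (heq x hx')⟩

lemma dist_self_proj {a : ℂ} (ha : 0 < a.re) : dist a (proj a) = a.re := by
  have : a - proj a = (a.re : ℂ) := by
    apply Complex.ext <;> simp [proj]
  rw [Complex.dist_eq, this, Complex.norm_real, Real.norm_eq_abs, abs_of_pos ha]

lemma circleMap_mem_punctured {a : ℂ} (ha : 0 < a.re) {s r₀ θ : ℝ} (has : a.re < s)
    (hs : s < r₀) (hθ : θ ∈ Ioo (-(π / 2)) (π / 2)) :
    circleMap (proj a) s θ ∈ halfDisk (proj a) r₀ \ {a} := by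
  refine ⟨circleMap_mem_halfDisk (proj_re a) ⟨ha.trans has, hs⟩ hθ, ?_⟩
  intro h
  have h1 := dist_circleMap (proj a) s θ
  rw [show circleMap (proj a) s θ = a from h, abs_of_pos (ha.trans has), dist_self_proj ha] at h1
  linarith

lemma tendsto_cutoff {t : ℝ} (ht : 0 < t) :
    ∀ᶠ n : ℕ in atTop, cutoff (n * t) = 1 ∧ deriv cutoff (n * t) = 0 := by
  have h : Tendsto (fun n : ℕ => (n : ℝ) * t) atTop atTop :=
    tendsto_natCast_atTop_atTop.atTop_mul_const ht
  filter_upwards [h.eventually_gt_atTop 2] with n hn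
  exact ⟨cutoff_one hn.le, deriv_cutoff_zero_of_gt hn⟩

/-- The energy identity: the flux of `−i conj(φ) (i∇+A)φ` through the circular arc equals the
energy in the half-disk. -/
lemma energy_identity (a : ℂ) (ha : 0 < a.re) (r₀ : ℝ) (φ : ℂ → ℂ) (m : ℂ → ℝ)
    (hm : Continuous m)
    (hcont : ContinuousOn φ (closure (halfDisk (proj a) r₀)))
    (hbc : ∀ x ∈ closure (halfDisk (proj a) r₀), x.re = 0 → φ x = 0)
    (hC2 : ∀ x ∈ halfDisk (proj a) r₀ \ {a}, ContDiffAt ℝ 2 φ x)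
    (heq : ∀ x ∈ halfDisk (proj a) r₀ \ {a}, magLap a φ x = (m x : ℂ) * φ x)
    (hint : IntegrableOn (mgSq a φ) (halfDisk (proj a) r₀))
    (hφa : φ a = 0) (r : ℝ) (har : a.re < r) (hr0 : r < r₀) (K : ℝ)
    (hK : ∀ θ ∈ Ioo (-(π / 2)) (π / 2), ‖mg1 a φ (circleMap (proj a) r θ)‖ ≤ K ∧
      ‖mg2 a φ (circleMap (proj a) r θ)‖ ≤ K) :
    ∫ θ in Ioo (-(π / 2)) (π / 2), (r : ℂ) *
      (-Complex.I * mg1 a φ (circleMap (proj a) r θ) *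
          (starRingEnd ℂ) (φ (circleMap (proj a) r θ)) * (Real.cos θ : ℂ) +
        -Complex.I * mg2 a φ (circleMap (proj a) r θ) *
          (starRingEnd ℂ) (φ (circleMap (proj a) r θ)) * (Real.sin θ : ℂ)) =
      ((∫ x in halfDisk (proj a) r, (mgSq a φ x - m x * ‖φ x‖ ^ 2) : ℝ) : ℂ) := by
  have hr : 0 < r := ha.trans har
  have hsub : closedHalfDisk (proj a) r ⊆ closure (halfDisk (proj a) r₀) := fun x hx =>
    mem_closure_halfDisk (hx.1.trans_lt hr0) hx.2
  have hsub2 : halfDisk (proj a) r ⊆ halfDisk (proj a) r₀ := fun x hx =>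
    ⟨hx.1.trans hr0, hx.2⟩
  have hmeas : MeasurableSet (halfDisk (proj a) r) := (isOpen_halfDisk _ _).measurableSet
  obtain ⟨C, hC0, hC⟩ := exists_bound_mul_deriv_cutoff
  have hφint : IntegrableOn (fun x => |m x| * ‖φ x‖ ^ 2) (halfDisk (proj a) r) := by
    refine IntegrableOn.mono_set ?_ (halfDisk_subset_closedHalfDisk _ _)
    refine ContinuousOn.integrableOn_compact (isCompact_closedHalfDisk _ _) ?_
    exact hm.abs.continuousOn.mul ((hcont.mono hsub).norm.pow 2)
  -- On `{φ = 0}` the truncated divergence is `0` for every `n`, while its supposed limit is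
  -- `|(i∇+A)φ|²`; the latter vanishes there only almost everywhere.
  have hbulk : Tendsto (fun n : ℕ => ∫ x in halfDisk (proj a) r, fluxDiv a φ m n x) atTop
      (nhds (∫ x in halfDisk (proj a) r, ((mgSq a φ x - m x * ‖φ x‖ ^ 2 : ℝ) : ℂ))) := by
    refine tendsto_integral_of_dominated_convergence
      (fun x => (1 + 2 * C) * mgSq a φ x + |m x| * ‖φ x‖ ^ 2) ?_ ?_ ?_ ?_
    · intro n
      exact ((truncated_identity a ha r₀ φ m hm hcont hbc hC2 heq hφa r hr hr0 n).1.mono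
        (halfDisk_subset_closedHalfDisk _ _)).aestronglyMeasurable hmeas
    · exact ((hint.mono_set hsub2).const_mul _).add hφint
    · intro n
      exact Eventually.of_forall fun x => norm_fluxDiv_le hC a x φ m n
    · set U : Set ℂ := halfDisk (proj a) r \ {a} with hU
      have hUo : IsOpen U := (isOpen_halfDisk _ _).sdiff isClosed_singleton
      have hUsub : U ⊆ halfDisk (proj a) r₀ \ {a} := fun x hx => ⟨hsub2 hx.1, hx.2⟩
      have hUd : ∀ x ∈ U, DifferentiableAt ℝ φ x := fun x hx =>
        (hC2 x (hUsub hx)).differentiableAt (by norm_num)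
      have hUc : ContinuousOn φ U := fun x hx => (hUd x hx).continuousAt.continuousWithinAt
      have hZ : MeasurableSet (U ∩ φ ⁻¹' {0}) := by
        have h1 : IsOpen (U ∩ φ ⁻¹' {0}ᶜ) :=
          hUc.isOpen_inter_preimage hUo isOpen_compl_singleton
        have : U ∩ φ ⁻¹' {0} = U \ (U ∩ φ ⁻¹' {0}ᶜ) := by ext; simp
        rw [this]
        exact hUo.measurableSet.diff h1.measurableSet
      have hae := ae_fderiv_eq_zero_of_eq_zero hZ (fun x hx => hUd x hx.1) (fun x hx => hx.2)
      rw [ae_restrict_iff' hZ] at hae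
      rw [ae_restrict_iff' hmeas]
      have hane : ∀ᵐ x : ℂ, x ≠ a := by
        simp [ae_iff]
      filter_upwards [hae, hane] with x h1 h2 hx
      by_cases h0 : φ x = 0
      · have hf := h1 ⟨⟨hx, h2⟩, h0⟩
        have e : mgSq a φ x = 0 := by simp [mgSq, mg1, mg2, pd1, pd2, hf, h0]
        have : ∀ n : ℕ, fluxDiv a φ m n x = 0 := fun n => fluxDiv_eq_zero (by simp [h0])
        simp [this, e, h0]
      · have ht : 0 < ‖φ x‖ ^ 2 := by positivity
        refine tendsto_const_nhds.congr' ?_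
        filter_upwards [tendsto_cutoff ht] with n hn
        simp [fluxDiv, hn.1, hn.2]
  have hX : ∀ θ ∈ Ioo (-(π / 2)) (π / 2), circleMap (proj a) r θ ∈ halfDisk (proj a) r₀ \ {a} :=
    fun θ hθ => circleMap_mem_punctured ha har hr0 hθ
  obtain ⟨M, hM⟩ := (isCompact_closedHalfDisk (proj a) r).exists_bound_of_continuousOn
    (hcont.mono hsub)
  have hXM : ∀ θ ∈ Ioo (-(π / 2)) (π / 2), ‖φ (circleMap (proj a) r θ)‖ ≤ M := fun θ hθ =>
    hM _ (circleMap_mem_closedHalfDisk (proj_re a) ⟨hr.le, le_rfl⟩ (Ioo_subset_Icc_self hθ))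
  have hcirc : ∀ θ, ContinuousAt (circleMap (proj a) r) θ := fun θ =>
    (continuous_circleMap _ _).continuousAt
  have hbd : Tendsto (fun n : ℕ => ∫ θ in Ioo (-(π / 2)) (π / 2), (r : ℂ) *
      (-Complex.I * mg1 a φ (circleMap (proj a) r θ) *
          (starRingEnd ℂ) (φ (circleMap (proj a) r θ)) *
          (cutoff (n * ‖φ (circleMap (proj a) r θ)‖ ^ 2) : ℂ) * (Real.cos θ : ℂ) +
        -Complex.I * mg2 a φ (circleMap (proj a) r θ) *
          (starRingEnd ℂ) (φ (circleMap (proj a) r θ)) *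
          (cutoff (n * ‖φ (circleMap (proj a) r θ)‖ ^ 2) : ℂ) * (Real.sin θ : ℂ))) atTop
      (nhds (∫ θ in Ioo (-(π / 2)) (π / 2), (r : ℂ) *
      (-Complex.I * mg1 a φ (circleMap (proj a) r θ) *
          (starRingEnd ℂ) (φ (circleMap (proj a) r θ)) * (Real.cos θ : ℂ) +
        -Complex.I * mg2 a φ (circleMap (proj a) r θ) *
          (starRingEnd ℂ) (φ (circleMap (proj a) r θ)) * (Real.sin θ : ℂ)))) := by
    refine tendsto_integral_of_dominated_convergence
      (fun _ => r * (K * M + K * M)) ?_ ?_ ?_ ?_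
    · intro n
      refine ContinuousOn.aestronglyMeasurable (fun θ hθ => ContinuousAt.continuousWithinAt ?_)
        measurableSet_Ioo
      have hx := hX θ hθ
      have c0 := hC2 _ hx
      have k1 := ContinuousAt.comp (f := circleMap (proj a) r)
        (fderiv_flux _ φ _ 1 n ((mg1_contDiffAt hx.2 c0).differentiableAt (by norm_num))
          (c0.differentiableAt (by norm_num))).1.continuousAt (hcirc θ)
      have k2 := ContinuousAt.comp (f := circleMap (proj a) r)
        (fderiv_flux _ φ _ 1 n ((mg2_contDiffAt hx.2 c0).differentiableAt (by norm_num))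
          (c0.differentiableAt (by norm_num))).1.continuousAt (hcirc θ)
      exact continuousAt_const.mul ((k1.mul (Complex.continuous_ofReal.comp
        Real.continuous_cos).continuousAt).add (k2.mul (Complex.continuous_ofReal.comp
        Real.continuous_sin).continuousAt))
    · exact integrable_const _
    · intro n
      rw [ae_restrict_iff' measurableSet_Ioo]
      refine Eventually.of_forall fun θ hθ => ?_
      obtain ⟨K1, K2⟩ := hK θ hθ
      have hM1 := hXM θ hθ
      have hK0 : 0 ≤ K := (norm_nonneg _).trans K1
      have hM0 : 0 ≤ M := (norm_nonneg _).trans hM1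
      have hb : ∀ (w : ℂ) (t : ℝ), ‖w‖ ≤ K → |t| ≤ 1 → ‖-Complex.I * w *
          (starRingEnd ℂ) (φ (circleMap (proj a) r θ)) *
          (cutoff (n * ‖φ (circleMap (proj a) r θ)‖ ^ 2) : ℂ) * (t : ℂ)‖ ≤ K * M := by
        intro w t hw ht
        simp only [norm_mul, norm_neg, Complex.norm_I, one_mul, RCLike.norm_conj,
          Complex.norm_real, Real.norm_eq_abs]
        have hc := cutoff_abs_le (n * ‖φ (circleMap (proj a) r θ)‖ ^ 2)
        calc _ ≤ K * M * 1 * 1 := by gcongr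
          _ = K * M := by ring
      rw [norm_mul, Complex.norm_real, Real.norm_eq_abs, abs_of_pos hr]
      gcongr
      exact (norm_add_le _ _).trans (add_le_add (hb _ _ K1 (Real.abs_cos_le_one θ))
        (hb _ _ K2 (Real.abs_sin_le_one θ)))
    · refine Eventually.of_forall fun θ => ?_
      by_cases h0 : φ (circleMap (proj a) r θ) = 0
      · simp [h0]
      · have ht : 0 < ‖φ (circleMap (proj a) r θ)‖ ^ 2 := by positivity
        refine tendsto_const_nhds.congr' ?_
        filter_upwards [tendsto_cutoff ht] with n hn
        simp [hn.1]
  rw [← integral_complex_ofReal]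
  refine tendsto_nhds_unique hbd (hbulk.congr fun n => ?_)
  exact (truncated_identity a ha r₀ φ m hm hcont hbc hC2 heq hφa r hr hr0 n).2.symm

/-! ### Differentiation of the arc integral -/

/-- The magnetic gradient is bounded on the arcs of radius close to `r`, up to the flat side. -/
lemma mg_bounded_on_arcs (a : ℂ) (ha : 0 < a.re) (r₀ : ℝ) (φ q : ℂ → ℂ) (B : ℝ)
    (hq : ∀ x, ‖q x‖ ≤ B)
    (hcont : ContinuousOn φ (closure (halfDisk (proj a) r₀)))
    (hbc : ∀ x ∈ closure (halfDisk (proj a) r₀), x.re = 0 → φ x = 0)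
    (hC2 : ∀ x ∈ halfDisk (proj a) r₀ \ {a}, ContDiffAt ℝ 2 φ x)
    (heq : ∀ x ∈ halfDisk (proj a) r₀ \ {a}, magLap a φ x = q x * φ x)
    (r : ℝ) (har : a.re < r) (hr0 : r < r₀) :
    ∃ η > 0, a.re < r - η ∧ r + η < r₀ ∧ ∃ K, ∀ s ∈ Ioo (r - η) (r + η),
      ∀ θ ∈ Ioo (-(π / 2)) (π / 2), ‖mg1 a φ (circleMap (proj a) s θ)‖ ≤ K ∧
        ‖mg2 a φ (circleMap (proj a) s θ)‖ ≤ K := by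
  obtain ⟨η, hη, h1, h2⟩ : ∃ η > 0, a.re < r - η ∧ r + η < r₀ := by
    refine ⟨min (r - a.re) (r₀ - r) / 2, ?_, ?_, ?_⟩
    · have : 0 < min (r - a.re) (r₀ - r) := lt_min (by linarith) (by linarith)
      linarith
    · have := min_le_left (r - a.re) (r₀ - r)
      linarith
    · have := min_le_right (r - a.re) (r₀ - r)
      linarith
  refine ⟨η, hη, h1, h2, ?_⟩
  obtain ⟨δ, hδ, K, hK⟩ := mg_bounded_near_flat a ha r₀ φ q B hq hcont hbc hC2 heq (r + η) h2
  set S : Set ℂ := Metric.closedBall (proj a) (r + η) ∩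
    ({x : ℂ | r - η ≤ dist x (proj a)} ∩ {x : ℂ | δ ≤ x.re}) with hS
  have hSc : IsCompact S := (isCompact_closedBall _ _).inter_right
    ((isClosed_le continuous_const (continuous_id.dist continuous_const)).inter
      (isClosed_le continuous_const Complex.continuous_re))
  have hSm : ∀ x ∈ S, x ∈ halfDisk (proj a) r₀ \ {a} := by
    rintro x ⟨hx1, hx2, hx3⟩
    refine ⟨⟨(Metric.mem_closedBall.1 hx1).trans_lt h2, hδ.trans_le hx3⟩, ?_⟩
    intro h
    have hx2' : r - η ≤ dist x (proj a) := hx2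
    rw [show x = a from h, dist_self_proj ha] at hx2'
    linarith
  obtain ⟨K1, hK1⟩ := hSc.exists_bound_of_continuousOn (f := mg1 a φ) fun x hx =>
    (mg1_contDiffAt (hSm x hx).2 (hC2 x (hSm x hx))).continuousAt.continuousWithinAt
  obtain ⟨K2, hK2⟩ := hSc.exists_bound_of_continuousOn (f := mg2 a φ) fun x hx =>
    (mg2_contDiffAt (hSm x hx).2 (hC2 x (hSm x hx))).continuousAt.continuousWithinAt
  refine ⟨max K (max K1 K2), fun s hs θ hθ => ?_⟩
  have hs0 : 0 < s := by linarith [hs.1]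
  by_cases hre : (circleMap (proj a) s θ).re ≤ δ
  · obtain ⟨b1, b2⟩ := hK _ (circleMap_mem_halfDisk (proj_re a) ⟨hs0, hs.2⟩ hθ) hre
    exact ⟨b1.trans (le_max_left _ _), b2.trans (le_max_left _ _)⟩
  · have hm : circleMap (proj a) s θ ∈ S := by
      refine ⟨?_, ?_, (not_le.1 hre).le⟩
      · rw [Metric.mem_closedBall, dist_circleMap, abs_of_pos hs0]; exact hs.2.le
      · rw [mem_ofPred_eq, dist_circleMap, abs_of_pos hs0]; exact hs.1.le
    exact ⟨(hK1 _ hm).trans ((le_max_left _ _).trans (le_max_right _ _)),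
      (hK2 _ hm).trans ((le_max_right _ _).trans (le_max_right _ _))⟩

/-- Radial derivative of `|φ|²` at fixed angle; the potential term drops out because it is purely
imaginary. -/
lemma hasDerivAt_norm_sq_radial (a c : ℂ) (φ : ℂ → ℂ) (s θ : ℝ)
    (hφ : DifferentiableAt ℝ φ (circleMap c s θ)) :
    HasDerivAt (fun t => ‖φ (circleMap c t θ)‖ ^ 2)
      (2 * (-Complex.I * mg1 a φ (circleMap c s θ) *
          (starRingEnd ℂ) (φ (circleMap c s θ)) * (Real.cos θ : ℂ) +
        -Complex.I * mg2 a φ (circleMap c s θ) *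
          (starRingEnd ℂ) (φ (circleMap c s θ)) * (Real.sin θ : ℂ)).re) s := by
  have hX : HasDerivAt (fun t => circleMap c t θ) (Complex.exp (θ * Complex.I)) s := by
    unfold circleMap
    simpa using ((hasDerivAt_id s).ofReal_comp.mul_const (Complex.exp (θ * Complex.I))).const_add c
  have h := (hφ.hasFDerivAt.comp_hasDerivAt s hX).norm_sq
  refine h.congr_deriv ?_
  rw [clm_apply_eq, pd1_eq_mg1 a, pd2_eq_mg2 a, (exp_mul_I_re_im θ).1, (exp_mul_I_re_im θ).2]
  simp [Complex.inner]
  ring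

/-- The density `−i (i∇+A_a)φ·ν conj(φ)` at angle `θ` on the arc of radius `s` about `π(a)`. -/
def arcFlux (a : ℂ) (φ : ℂ → ℂ) (s θ : ℝ) : ℂ :=
  -Complex.I * mg1 a φ (circleMap (proj a) s θ) *
      (starRingEnd ℂ) (φ (circleMap (proj a) s θ)) * (Real.cos θ : ℂ) +
    -Complex.I * mg2 a φ (circleMap (proj a) s θ) *
      (starRingEnd ℂ) (φ (circleMap (proj a) s θ)) * (Real.sin θ : ℂ)

/-- Differentiation of `H` under the integral sign. -/
lemma hasDerivAt_arc_integral (a : ℂ) (ha : 0 < a.re) (r₀ : ℝ) (φ : ℂ → ℂ)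
    (hcont : ContinuousOn φ (closure (halfDisk (proj a) r₀)))
    (hC2 : ∀ x ∈ halfDisk (proj a) r₀ \ {a}, ContDiffAt ℝ 2 φ x)
    (r η K : ℝ) (hη : 0 < η) (har : a.re < r - η) (hr0 : r + η < r₀)
    (hK : ∀ s ∈ Ioo (r - η) (r + η), ∀ θ ∈ Ioo (-(π / 2)) (π / 2),
      ‖mg1 a φ (circleMap (proj a) s θ)‖ ≤ K ∧ ‖mg2 a φ (circleMap (proj a) s θ)‖ ≤ K) :
    IntegrableOn (arcFlux a φ r) (Ioo (-(π / 2)) (π / 2)) ∧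
    HasDerivAt (fun s => ∫ θ in Ioo (-(π / 2)) (π / 2), ‖φ (circleMap (proj a) s θ)‖ ^ 2)
      (∫ θ in Ioo (-(π / 2)) (π / 2), 2 * (arcFlux a φ r θ).re) r := by
  have hsub : closedHalfDisk (proj a) (r + η) ⊆ closure (halfDisk (proj a) r₀) := fun x hx =>
    mem_closure_halfDisk (hx.1.trans_lt hr0) hx.2
  obtain ⟨M, hM⟩ := (isCompact_closedHalfDisk (proj a) (r + η)).exists_bound_of_continuousOn
    (hcont.mono hsub)
  have hXM : ∀ s ∈ Ioo (r - η) (r + η), ∀ θ ∈ Ioo (-(π / 2)) (π / 2),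
      ‖φ (circleMap (proj a) s θ)‖ ≤ M := fun s hs θ hθ =>
    hM _ (circleMap_mem_closedHalfDisk (proj_re a) ⟨by linarith [hs.1], hs.2.le⟩
      (Ioo_subset_Icc_self hθ))
  have hX : ∀ s ∈ Ioo (r - η) (r + η), ∀ θ ∈ Ioo (-(π / 2)) (π / 2),
      ContDiffAt ℝ 2 φ (circleMap (proj a) s θ) ∧ circleMap (proj a) s θ ≠ a := fun s hs θ hθ =>
    have h := circleMap_mem_punctured ha (har.trans hs.1) (hs.2.trans hr0) hθ
    ⟨hC2 _ h, h.2⟩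
  have hnhds : Ioo (r - η) (r + η) ∈ nhds r := Ioo_mem_nhds (by linarith) (by linarith)
  have hrmem : r ∈ Ioo (r - η) (r + η) := ⟨by linarith, by linarith⟩
  have hcirc : ∀ s θ, ContinuousAt (circleMap (proj a) s) θ := fun s θ =>
    (continuous_circleMap _ _).continuousAt
  have hφm : ∀ s ∈ Ioo (r - η) (r + η), AEStronglyMeasurable
      (fun θ => ‖φ (circleMap (proj a) s θ)‖ ^ 2)
      (volume.restrict (Ioo (-(π / 2)) (π / 2))) := by
    intro s hs
    refine ContinuousOn.aestronglyMeasurable (fun θ hθ => ContinuousAt.continuousWithinAt ?_)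
      measurableSet_Ioo
    exact (ContinuousAt.comp (f := circleMap (proj a) s) (hX s hs θ hθ).1.continuousAt
      (hcirc s θ)).norm.pow 2
  have hFm : AEStronglyMeasurable (arcFlux a φ r)
      (volume.restrict (Ioo (-(π / 2)) (π / 2))) := by
    refine ContinuousOn.aestronglyMeasurable (fun θ hθ => ContinuousAt.continuousWithinAt ?_)
      measurableSet_Ioo
    obtain ⟨c0, hne⟩ := hX r hrmem θ hθ
    have k1 := ContinuousAt.comp (f := circleMap (proj a) r)
      (mg1_contDiffAt hne c0).continuousAt (hcirc r θ)
    have k2 := ContinuousAt.comp (f := circleMap (proj a) r)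
      (mg2_contDiffAt hne c0).continuousAt (hcirc r θ)
    have k3 := ContinuousAt.comp (g := starRingEnd ℂ) Complex.continuous_conj.continuousAt
      (ContinuousAt.comp (f := circleMap (proj a) r) c0.continuousAt (hcirc r θ))
    exact ((((continuousAt_const.mul k1).mul k3).mul (Complex.continuous_ofReal.comp
        Real.continuous_cos).continuousAt).add
        (((continuousAt_const.mul k2).mul k3).mul (Complex.continuous_ofReal.comp
        Real.continuous_sin).continuousAt))
  have hFb : ∀ θ ∈ Ioo (-(π / 2)) (π / 2), ∀ s ∈ Ioo (r - η) (r + η),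
      ‖arcFlux a φ s θ‖ ≤ K * M + K * M := by
    intro θ hθ s hs
    obtain ⟨K1, K2⟩ := hK s hs θ hθ
    have hM1 := hXM s hs θ hθ
    have hK0 : 0 ≤ K := (norm_nonneg _).trans K1
    have hM0 : 0 ≤ M := (norm_nonneg _).trans hM1
    have hb : ∀ (w : ℂ) (t : ℝ), ‖w‖ ≤ K → |t| ≤ 1 → ‖-Complex.I * w *
        (starRingEnd ℂ) (φ (circleMap (proj a) s θ)) * (t : ℂ)‖ ≤ K * M := by
      intro w t hw ht
      simp only [norm_mul, norm_neg, Complex.norm_I, one_mul, RCLike.norm_conj,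
        Complex.norm_real, Real.norm_eq_abs]
      calc _ ≤ K * M * 1 := by gcongr
        _ = K * M := by ring
    exact (norm_add_le _ _).trans
      (add_le_add (hb _ _ K1 (Real.abs_cos_le_one θ)) (hb _ _ K2 (Real.abs_sin_le_one θ)))
  refine ⟨Integrable.mono' (g := fun _ => K * M + K * M) (integrable_const _) hFm ?_, ?_⟩
  · rw [ae_restrict_iff' measurableSet_Ioo]
    exact Eventually.of_forall fun θ hθ => hFb θ hθ r hrmem
  refine (hasDerivAt_integral_of_dominated_loc_of_deriv_le (bound := fun _ => 2 * (K * M + K * M))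
    (F' := fun s θ => 2 * (arcFlux a φ s θ).re)
    hnhds ?_ ?_ ?_ ?_ ?_ ?_).2
  · exact mem_of_superset hnhds hφm
  · refine Integrable.mono' (g := fun _ => M ^ 2) (integrable_const _) (hφm r hrmem) ?_
    rw [ae_restrict_iff' measurableSet_Ioo]
    refine Eventually.of_forall fun θ hθ => ?_
    rw [norm_pow, norm_norm]
    have := hXM r hrmem θ hθ
    gcongr
  · exact aestronglyMeasurable_const.mul (Complex.continuous_re.comp_aestronglyMeasurable hFm)
  · rw [ae_restrict_iff' measurableSet_Ioo]
    refine Eventually.of_forall fun θ hθ s hs => ?_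
    rw [norm_mul, Real.norm_eq_abs, Real.norm_eq_abs, abs_of_pos (by norm_num : (0 : ℝ) < 2)]
    gcongr
    exact (Complex.abs_re_le_norm _).trans (hFb θ hθ s hs)
  · exact integrable_const _
  · rw [ae_restrict_iff' measurableSet_Ioo]
    exact Eventually.of_forall fun θ hθ s hs => hasDerivAt_norm_sq_radial a (proj a) φ s θ
      ((hX s hs θ hθ).1.differentiableAt (by norm_num))

/-- Derivative of `H`: under the standing hypotheses, plus `|φ| = O(|x−a|^{1/2})` and
`|∇φ| = O(|x−a|^{-1/2})` at `a`, for `a₁ < r < r₀` the map `r ↦ H(φ,r,π(a))` is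
differentiable with `dH/dr = −(2i/r)∫_{∂D_r⁺}(i∇+A_a)φ·ν conj(φ) dσ = (2/r)E`;
in particular `−i∫_{∂D_r⁺}(i∇+A_a)φ·ν conj(φ) dσ` is real and equals `E`. -/
theorem hasDerivAt_Hfun
    (a : ℂ) (ha : 0 < a.re)
    (lam r₀ : ℝ) (hlam : 0 < lam) (har₀ : a.re < r₀)
    (p : ℂ → ℝ) (hp : ContDiff ℝ 1 p) (hppos : ∀ x, 0 < p x)
    (hpbdd : BddAbove (Set.range p))
    (hpgrad : ∃ Cg : ℝ, ∀ x, ‖fderiv ℝ p x‖ ≤ Cg)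
    (hsmall : 2 * lam * sSup (Set.range p) * r₀ ^ 2 < 1)
    (φ : ℂ → ℂ)
    (hcont : ContinuousOn φ (closure (halfDisk (proj a) r₀)))
    (hbc : ∀ x ∈ closure (halfDisk (proj a) r₀), x.re = 0 → φ x = 0)
    (hC2 : ContDiffOn ℝ 2 φ (halfDisk (proj a) r₀ \ {a}))
    (heq : ∀ x ∈ halfDisk (proj a) r₀ \ {a},
      magLap a φ x = ((lam * p x : ℝ) : ℂ) * φ x)
    (hint : IntegrableOn (mgSq a φ) (halfDisk (proj a) r₀))
    (hO1 : φ =O[nhdsWithin a {a}ᶜ] fun x => Real.sqrt ‖x - a‖)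
    (hO2 : (fun x => fderiv ℝ φ x) =O[nhdsWithin a {a}ᶜ] fun x => (Real.sqrt ‖x - a‖)⁻¹) :
    ∀ r : ℝ, a.re < r → r < r₀ →
      HasDerivAt (fun s => Hfun φ s (proj a)) ((2 / r) * Efun a φ r (proj a) lam p) r ∧
      (-Complex.I) * (∫ θ in Ioo (-(π / 2)) (π / 2), (r : ℂ) *
          ((mg1 a φ (circleMap (proj a) r θ) * (Real.cos θ : ℂ) +
            mg2 a φ (circleMap (proj a) r θ) * (Real.sin θ : ℂ)) *
            (starRingEnd ℂ) (φ (circleMap (proj a) r θ)))) =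
        ((Efun a φ r (proj a) lam p : ℝ) : ℂ) := by
  intro r har hr0
  have hUo : IsOpen (halfDisk (proj a) r₀ \ {a}) :=
    (isOpen_halfDisk _ _).sdiff isClosed_singleton
  have hC2' : ∀ x ∈ halfDisk (proj a) r₀ \ {a}, ContDiffAt ℝ 2 φ x := fun x hx =>
    hC2.contDiffAt (hUo.mem_nhds hx)
  have haD : a ∈ halfDisk (proj a) r₀ := ⟨by rw [dist_self_proj ha]; exact har₀, ha⟩
  have hφa : φ a = 0 := by
    have hca : ContinuousAt φ a :=
      hcont.continuousAt (mem_of_superset ((isOpen_halfDisk _ _).mem_nhds haD) subset_closure)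
    have h1 : Tendsto φ (nhdsWithin a {a}ᶜ) (nhds (φ a)) := hca.tendsto.mono_left inf_le_left
    have h2 : Tendsto (fun x : ℂ => Real.sqrt ‖x - a‖) (nhdsWithin a {a}ᶜ) (nhds 0) := by
      have : ContinuousAt (fun x : ℂ => Real.sqrt ‖x - a‖) a := by fun_prop
      have h := this.tendsto
      simp only [sub_self, norm_zero, Real.sqrt_zero] at h
      exact h.mono_left inf_le_left
    exact tendsto_nhds_unique h1 (hO1.trans_tendsto h2)
  have hq : ∀ x, ‖((lam * p x : ℝ) : ℂ)‖ ≤ lam * sSup (Set.range p) := by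
    intro x
    rw [Complex.norm_real, Real.norm_eq_abs, abs_of_pos (mul_pos hlam (hppos x))]
    have := le_csSup hpbdd (mem_range_self x)
    gcongr
  obtain ⟨η, hη, h1, h2, K, hK⟩ := mg_bounded_on_arcs a ha r₀ φ
    (fun x => ((lam * p x : ℝ) : ℂ)) _ hq hcont hbc hC2' heq r har hr0
  have hr : 0 < r := ha.trans har
  have hE := energy_identity a ha r₀ φ (fun x => lam * p x) (continuous_const.mul hp.continuous)
    hcont hbc hC2' heq hint hφa r har hr0 K (hK r ⟨by linarith, by linarith⟩)
  change _ = ((Efun a φ r (proj a) lam p : ℝ) : ℂ) at hE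
  refine ⟨?_, ?_⟩
  · obtain ⟨hFi, hder⟩ := hasDerivAt_arc_integral a ha r₀ φ hcont hC2' r η K hη h1 h2 hK
    have hH : (fun s => Hfun φ s (proj a)) =ᶠ[nhds r]
        fun s => ∫ θ in Ioo (-(π / 2)) (π / 2), ‖φ (circleMap (proj a) s θ)‖ ^ 2 := by
      filter_upwards [eventually_ne_nhds hr.ne'] with s hs
      simp only [Hfun, bdryInt]
      rw [integral_const_mul, ← mul_assoc, one_div_mul_cancel hs, one_mul]
    refine (hder.congr_of_eventuallyEq hH).congr_deriv ?_
    have hE' : (r : ℂ) * ∫ θ in Ioo (-(π / 2)) (π / 2), arcFlux a φ r θ =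
        ((Efun a φ r (proj a) lam p : ℝ) : ℂ) := by
      rw [← hE, ← integral_const_mul]
      rfl
    have hre : ∫ θ in Ioo (-(π / 2)) (π / 2), (arcFlux a φ r θ).re =
        (∫ θ in Ioo (-(π / 2)) (π / 2), arcFlux a φ r θ).re := integral_re hFi
    have hE2 := congrArg Complex.re hE'
    rw [Complex.re_ofReal_mul, Complex.ofReal_re] at hE2
    rw [integral_const_mul, hre, ← hE2]
    field_simp
  · rw [← hE, ← integral_const_mul]
    refine integral_congr_ae (Eventually.of_forall fun θ => ?_)
    simp only
    ring

end
end

section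
/- Let φ be as in the standing hypotheses and satisfy the vanishing expansion of order 1/2 at a with coefficients c₁, d₁. Then the limit M_a := lim_{ε→0⁺} ∫_{∂D_ε(a)} { Re[ (i∇+A_a)φ·ν · conj((i∇+A_a)φ·(x−π(a))) ] − (1/2)|(i∇+A_a)φ|²·(x−π(a))·ν } dσ exists (ν the outward unit normal of D_ε(a)), and M_a = (π a₁/4)·(c₁² − d₁²). -/
/-!
On a small circle around `a` the magnetic gradient of `φ` is `ε^{-1/2}` times a function of the
angle, up to an error `o(ε^{-1/2})` uniform in the angle: both expansions in the hypotheses enter,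
since the potential has size `1 / (2 ε)` there (`mg_sub_le`). With `α = (c₁ + i d₁) / 2`,
`β = (c₁ - i d₁) / 2` and `e = exp (iθ)`, the rescaled magnetic gradient of the model function is
exactly `((i / 2) (α e + β), (1 / 2) (α e - β))` (`mg1_model`, `mg2_model`).

The Pohozaev integrand is quadratic in the magnetic gradient, so the factor `ε` from arclength
balances the singularity, and `x - π(a) = (a₁, 0) + ε ν`. The integrand thus converges, uniformly
bounded, to its value on the model with `x - π(a)` replaced by `(a₁, 0)`. That value is the constant
`a₁ (c₁² - d₁²) / 8` (`rescaledPoho_model`), and dominated convergence on `(0, 2π]` gives the limit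
`2π · a₁ (c₁² - d₁²) / 8`.
-/

open MeasureTheory Real Filter Set Asymptotics

noncomputable section

/-- The Pohozaev boundary integrand at a point `x` with unit normal `ν = (ν₁,ν₂)`:
`Re[(i∇+A_a)φ·ν · conj((i∇+A_a)φ·(x−π(a)))] − (1/2)|(i∇+A_a)φ|² (x−π(a))·ν`. -/
def pohoIntegrand (a : ℂ) (φ : ℂ → ℂ) (x : ℂ) (ν1 ν2 : ℝ) : ℝ :=
  ((mg1 a φ x * (ν1 : ℂ) + mg2 a φ x * (ν2 : ℂ)) *
      (starRingEnd ℂ) (mg1 a φ x * (((x - proj a).re : ℝ) : ℂ) +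
        mg2 a φ x * (((x - proj a).im : ℝ) : ℂ))).re -
    (1 / 2) * mgSq a φ x * ((x - proj a).re * ν1 + (x - proj a).im * ν2)

/-- The integral over the full circle `∂D_ε(a)` whose limit as `ε → 0⁺` defines the
Pohozaev remainder `M_a`. -/
def pohoBdry (a : ℂ) (φ : ℂ → ℂ) (ε : ℝ) : ℝ :=
  ∫ θ in Ioc 0 (2 * π), ε * pohoIntegrand a φ (circleMap a ε θ) (Real.cos θ) (Real.sin θ)

/-- The model half-integer homogeneous function
`e^{iθ_a/2}|x−a|^{1/2}( c₁ cos(θ_a/2) + d₁ sin(θ_a/2) )`, written in the branch-free form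
`|x−a|^{1/2}( c₁(1+ω)/2 + d₁(ω−1)/(2i) )` with `ω = (x−a)/|x−a|`. -/
def modelHalf (a : ℂ) (c₁ d₁ : ℝ) (x : ℂ) : ℂ :=
  (Real.sqrt ‖x - a‖ : ℂ) *
    ((c₁ : ℂ) * (1 + (x - a) / (‖x - a‖ : ℂ)) / 2 +
      (d₁ : ℂ) * ((x - a) / (‖x - a‖ : ℂ) - 1) / (2 * Complex.I))

/-! ### The differential of the model function -/

lemma hasFDerivAt_sqrt_norm (a x : ℂ) (hx : x ≠ a) :
    HasFDerivAt (fun y : ℂ => √‖y - a‖)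
      ((1 / (2 * √‖x - a‖ ^ 3)) • innerSL ℝ (x - a)) x := by
  have hs : 0 < ‖x - a‖ := norm_pos_iff.2 (sub_ne_zero.2 hx)
  have h1 : HasFDerivAt (fun y : ℂ => ‖y - a‖ ^ 2) (2 • innerSL ℝ (x - a)) x := by
    have := (hasStrictFDerivAt_norm_sq (x - a)).hasFDerivAt.comp x ((hasFDerivAt_id x).sub_const a)
    exact this
  have h2 : HasFDerivAt (fun y : ℂ => ‖y - a‖) ((1 / (2 * ‖x - a‖)) • (2 • innerSL ℝ (x - a))) x := by
    have := h1.sqrt (by positivity)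
    simpa [Real.sqrt_sq, norm_nonneg] using this
  have h3 := h2.sqrt hs.ne'
  have hS : ‖x - a‖ = √‖x - a‖ ^ 2 := (Real.sq_sqrt hs.le).symm
  have hSp : 0 < √‖x - a‖ := Real.sqrt_pos.2 hs
  have hL : (1 / (2 * √‖x - a‖ ^ 3)) • innerSL ℝ (x - a)
      = (1 / (2 * √‖x - a‖)) • ((1 / (2 * ‖x - a‖)) • (2 • innerSL ℝ (x - a))) := by
    rw [← Nat.cast_smul_eq_nsmul ℝ, smul_smul, smul_smul]
    congr 1
    generalize √‖x - a‖ = S at *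
    rw [hS]
    push_cast
    field_simp
  rw [hL]
  exact h3

/-- The model function is `α |x - a|^{1/2} + β (x - a) |x - a|^{-1/2}`, with `α = (c + i d) / 2` and
`β = (c - i d) / 2`. -/
lemma modelHalf_eq (a : ℂ) (c d : ℝ) (x : ℂ) :
    modelHalf a c d x = (c + d * Complex.I) / 2 * (√‖x - a‖ : ℝ)
      + (c - d * Complex.I) / 2 * ((x - a) * ((√‖x - a‖ : ℝ) : ℂ)⁻¹) := by
  unfold modelHalf
  rcases eq_or_ne x a with rfl | hx
  · simp
  have hs : 0 < ‖x - a‖ := norm_pos_iff.2 (sub_ne_zero.2 hx)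
  have hS : ((‖x - a‖ : ℝ) : ℂ) = ((√‖x - a‖ : ℝ) : ℂ) ^ 2 := by
    rw [← Complex.ofReal_pow, Real.sq_sqrt hs.le]
  have hSp : ((√‖x - a‖ : ℝ) : ℂ) ≠ 0 := by
    exact_mod_cast (Real.sqrt_pos.2 hs).ne'
  rw [hS]
  generalize ((√‖x - a‖ : ℝ) : ℂ) = S at *
  have hI : (Complex.I)⁻¹ = -Complex.I := Complex.inv_I
  rw [div_eq_mul_inv _ (2 * Complex.I), mul_inv, hI]
  field_simp
  ring

/-- The differential of the model function; `⟪x - a, h⟫ / (2 ‖x - a‖^{3/2})` is that of `√‖x - a‖`. -/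
lemma fderiv_modelHalf (a : ℂ) (c d : ℝ) (x : ℂ) (hx : x ≠ a) (h : ℂ) :
    fderiv ℝ (modelHalf a c d) x h =
      (c + d * Complex.I) / 2 * ((1 / (2 * √‖x - a‖ ^ 3) * inner ℝ (x - a) h : ℝ) : ℂ)
      + (c - d * Complex.I) / 2 * (h * ((√‖x - a‖ : ℝ) : ℂ)⁻¹
        - (x - a) * (((√‖x - a‖ : ℝ) : ℂ) ^ 2)⁻¹ *
          ((1 / (2 * √‖x - a‖ ^ 3) * inner ℝ (x - a) h : ℝ) : ℂ)) := by
  have hs : 0 < ‖x - a‖ := norm_pos_iff.2 (sub_ne_zero.2 hx)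
  have hSp : ((√‖x - a‖ : ℝ) : ℂ) ≠ 0 := by
    exact_mod_cast (Real.sqrt_pos.2 hs).ne'
  have h0 := hasFDerivAt_sqrt_norm a x hx
  have h1 : HasFDerivAt (fun y : ℂ => ((√‖y - a‖ : ℝ) : ℂ)) _ x :=
    Complex.ofRealCLM.hasFDerivAt.comp x h0
  have h2 : HasFDerivAt (fun y : ℂ => (((√‖y - a‖ : ℝ) : ℂ))⁻¹) _ x :=
    (hasFDerivAt_inv' (𝕜 := ℝ) hSp).comp x h1
  have h3 := (h1.const_mul ((c + d * Complex.I) / 2)).add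
    ((((hasFDerivAt_id (𝕜 := ℝ) x).sub_const a).mul h2).const_mul ((c - d * Complex.I) / 2))
  have hf : modelHalf a c d = fun x => (c + d * Complex.I) / 2 * (√‖x - a‖ : ℝ)
      + (c - d * Complex.I) / 2 * ((x - a) * ((√‖x - a‖ : ℝ) : ℂ)⁻¹) :=
    funext (modelHalf_eq a c d)
  rw [hf]
  have h4 := DFunLike.congr_fun h3.fderiv h
  simp at h4
  refine h4.trans ?_
  simp
  ring

/-! ### The model function on circles around the pole

The radius is written `s ^ 2` with `0 < s`, so that `√‖x - a‖ = s`. -/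

lemma circle_sub (a : ℂ) (s θ : ℝ) :
    circleMap a (s ^ 2) θ - a = (s : ℂ) ^ 2 * (Real.cos θ + Real.sin θ * Complex.I) := by
  simp [circleMap, Complex.exp_mul_I]

lemma norm_circle_sub (a : ℂ) (s θ : ℝ) : ‖circleMap a (s ^ 2) θ - a‖ = s ^ 2 := by
  simp

lemma sqrt_circle_sub (a : ℂ) (s θ : ℝ) (hs : 0 < s) : √‖circleMap a (s ^ 2) θ - a‖ = s := by
  rw [norm_circle_sub, Real.sqrt_sq hs.le]

lemma circle_ne (a : ℂ) (s θ : ℝ) (hs : 0 < s) : circleMap a (s ^ 2) θ ≠ a := by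
  intro h
  have := norm_circle_sub a s θ
  rw [h] at this
  simp at this
  exact (pow_pos hs 2).ne this

lemma abPot_circle (a : ℂ) (s θ : ℝ) (hs : 0 < s) :
    abPot1 a (circleMap a (s ^ 2) θ) = -Real.sin θ / (2 * s ^ 2) ∧
      abPot2 a (circleMap a (s ^ 2) θ) = Real.cos θ / (2 * s ^ 2) := by
  have h : abPot a (circleMap a (s ^ 2) θ) =
      ((-Real.sin θ / (2 * s ^ 2) : ℝ) : ℂ) + ((Real.cos θ / (2 * s ^ 2) : ℝ) : ℂ) * Complex.I := by
    unfold abPot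
    rw [norm_circle_sub, circle_sub]
    have : (s : ℂ) ≠ 0 := by exact_mod_cast hs.ne'
    push_cast
    field_simp
    linear_combination (Complex.sin θ) * Complex.I_sq
  constructor
  · rw [abPot1, h, Complex.add_re, Complex.re_ofReal_mul, Complex.ofReal_re, Complex.I_re]; ring
  · rw [abPot2, h, Complex.add_im, Complex.im_ofReal_mul, Complex.ofReal_im, Complex.I_im]; ring

/-- On the circle of radius `s²`, the first component of the magnetic gradient of the model
function, rescaled by `s`, does not depend on `s`. -/
lemma mg1_model (a : ℂ) (c d s θ : ℝ) (hs : 0 < s) :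
    s * mg1 a (modelHalf a c d) (circleMap a (s ^ 2) θ) =
      Complex.I / 2 * ((c + d * Complex.I) / 2 * (Real.cos θ + Real.sin θ * Complex.I)
        + (c - d * Complex.I) / 2) := by
  have hs' : (s : ℂ) ≠ 0 := by exact_mod_cast hs.ne'
  have hin : inner ℝ (circleMap a (s ^ 2) θ - a) 1 = s ^ 2 * Real.cos θ := by
    rw [circle_sub, Complex.inner]
    simp [← Complex.ofReal_pow, -Complex.ofReal_cos, -Complex.ofReal_sin]
  have hCS : (Real.cos θ : ℂ) ^ 2 + (Real.sin θ : ℂ) ^ 2 = 1 := by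
    exact_mod_cast Real.cos_sq_add_sin_sq θ
  rw [mg1, pd1, fderiv_modelHalf _ _ _ _ (circle_ne a s θ hs), modelHalf_eq,
    sqrt_circle_sub a s θ hs, (abPot_circle a s θ hs).1, hin, circle_sub]
  push_cast at hCS ⊢
  generalize Complex.cos θ = C at *
  generalize Complex.sin θ = S at *
  field_simp
  linear_combination (-S * (c + d * Complex.I) - (c - d * Complex.I) * S * C) * Complex.I_sq
    - Complex.I * (c - d * Complex.I) * hCS

/-- On the circle of radius `s²`, the second component of the magnetic gradient of the model
function, rescaled by `s`, does not depend on `s`. -/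
lemma mg2_model (a : ℂ) (c d s θ : ℝ) (hs : 0 < s) :
    s * mg2 a (modelHalf a c d) (circleMap a (s ^ 2) θ) =
      1 / 2 * ((c + d * Complex.I) / 2 * (Real.cos θ + Real.sin θ * Complex.I)
        - (c - d * Complex.I) / 2) := by
  have hs' : (s : ℂ) ≠ 0 := by exact_mod_cast hs.ne'
  have hin : inner ℝ (circleMap a (s ^ 2) θ - a) Complex.I = s ^ 2 * Real.sin θ := by
    rw [circle_sub, Complex.inner]
    simp [← Complex.ofReal_pow, -Complex.ofReal_cos, -Complex.ofReal_sin]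
  have hCS : (Real.cos θ : ℂ) ^ 2 + (Real.sin θ : ℂ) ^ 2 = 1 := by
    exact_mod_cast Real.cos_sq_add_sin_sq θ
  rw [mg2, pd2, fderiv_modelHalf _ _ _ _ (circle_ne a s θ hs), modelHalf_eq,
    sqrt_circle_sub a s θ hs, (abPot_circle a s θ hs).2, hin, circle_sub]
  push_cast at hCS ⊢
  generalize Complex.cos θ = C at *
  generalize Complex.sin θ = S at *
  field_simp
  linear_combination (2 - S ^ 2) * (c - d * Complex.I) * Complex.I_sq
    + (c - d * Complex.I) * hCS

/-! ### Comparison of `φ` with the model function -/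

/-- Closeness of `φ` and its differential to those of the model function transfers to the rescaled
magnetic gradients: the potential has modulus `1 / (2 s²)` on the circle of radius `s²`. -/
lemma mg_sub_le (a : ℂ) (c d s θ δ : ℝ) (hs : 0 < s) (φ : ℂ → ℂ)
    (h0 : ‖φ (circleMap a (s ^ 2) θ) - modelHalf a c d (circleMap a (s ^ 2) θ)‖ ≤ δ * s)
    (h1 : ‖fderiv ℝ φ (circleMap a (s ^ 2) θ)
      - fderiv ℝ (modelHalf a c d) (circleMap a (s ^ 2) θ)‖ ≤ δ * s⁻¹) :
    ‖s * mg1 a φ (circleMap a (s ^ 2) θ) - s * mg1 a (modelHalf a c d) (circleMap a (s ^ 2) θ)‖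
        ≤ 2 * δ ∧
      ‖s * mg2 a φ (circleMap a (s ^ 2) θ) - s * mg2 a (modelHalf a c d) (circleMap a (s ^ 2) θ)‖
        ≤ 2 * δ := by
  have key : ∀ (h : ℂ) (t A : ℝ), ‖h‖ = 1 → |t| ≤ 1 → A = t / (2 * s ^ 2) →
      ‖(s : ℂ) * (Complex.I * fderiv ℝ φ (circleMap a (s ^ 2) θ) h
          + (A : ℂ) * φ (circleMap a (s ^ 2) θ))
        - s * (Complex.I * fderiv ℝ (modelHalf a c d) (circleMap a (s ^ 2) θ) h
          + (A : ℂ) * modelHalf a c d (circleMap a (s ^ 2) θ))‖ ≤ 2 * δ := by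
    intro h t A hh ht hA
    have hδ : 0 ≤ δ := by
      have := (norm_nonneg _).trans h0
      exact nonneg_of_mul_nonneg_left this hs
    have e1 := (fderiv ℝ φ (circleMap a (s ^ 2) θ)
      - fderiv ℝ (modelHalf a c d) (circleMap a (s ^ 2) θ)).le_of_opNorm_le h1 h
    rw [hh, mul_one, sub_apply] at e1
    have hAn : |A| ≤ 1 / (2 * s ^ 2) := by
      rw [hA, abs_div, abs_of_pos (by positivity : 0 < 2 * s ^ 2)]
      gcongr
    have e2 : (s : ℂ) * (Complex.I * fderiv ℝ φ (circleMap a (s ^ 2) θ) h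
          + (A : ℂ) * φ (circleMap a (s ^ 2) θ))
        - s * (Complex.I * fderiv ℝ (modelHalf a c d) (circleMap a (s ^ 2) θ) h
          + (A : ℂ) * modelHalf a c d (circleMap a (s ^ 2) θ))
        = (s : ℂ) * (Complex.I * (fderiv ℝ φ (circleMap a (s ^ 2) θ) h
            - fderiv ℝ (modelHalf a c d) (circleMap a (s ^ 2) θ) h))
          + s * (A * (φ (circleMap a (s ^ 2) θ) - modelHalf a c d (circleMap a (s ^ 2) θ))) := by
      ring
    rw [e2]
    refine (norm_add_le _ _).trans ?_
    simp only [norm_mul, Complex.norm_I, one_mul, Complex.norm_real, Real.norm_eq_abs,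
      abs_of_pos hs]
    calc _ ≤ s * (δ * s⁻¹) + s * (1 / (2 * s ^ 2) * (δ * s)) := by gcongr
      _ = δ + δ / 2 := by field_simp
      _ ≤ 2 * δ := by linarith
  have hA := abPot_circle a s θ hs
  exact ⟨key 1 (-Real.sin θ) _ (by simp) (by simpa using Real.abs_sin_le_one θ) hA.1,
    key Complex.I (Real.cos θ) _ (by simp) (Real.abs_cos_le_one θ) hA.2⟩

/-- A property holding in a punctured neighbourhood of `a` holds on all small circles. -/
lemma eventually_circle {a : ℂ} {P : ℂ → Prop} (h : ∀ᶠ x in nhdsWithin a {a}ᶜ, P x) :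
    ∀ᶠ ε in nhdsWithin (0 : ℝ) (Ioi 0), ∀ θ : ℝ, P (circleMap a ε θ) := by
  obtain ⟨r, hr, hr'⟩ := Metric.mem_nhdsWithin_iff.1 h
  filter_upwards [Ioo_mem_nhdsGT hr] with ε hε θ
  refine hr' ⟨?_, ?_⟩
  · simp [circleMap, dist_eq_norm, abs_of_pos hε.1, hε.2]
  · exact circleMap_ne_center (c := a) (θ := θ) hε.1.ne'

/-! ### The rescaled Pohozaev integrand -/

/-- The Pohozaev integrand, multiplied by the arclength factor, as a polynomial expression in
`q = (e, C, S, M, N)`: the radius `e`, the unit normal `(C, S)`, and the magnetic gradient `(M, N)`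
rescaled by `√e`; `r` is the first coordinate of the pole, so that `x - π(a) = (r + e C, e S)`. -/
def rescaledPoho (r : ℝ) (q : ℝ × ℝ × ℝ × ℂ × ℂ) : ℝ :=
  ((q.2.2.2.1 * (q.2.1 : ℂ) + q.2.2.2.2 * (q.2.2.1 : ℂ)) *
      (starRingEnd ℂ) (q.2.2.2.1 * ((r + q.1 * q.2.1 : ℝ) : ℂ) +
        q.2.2.2.2 * ((q.1 * q.2.2.1 : ℝ) : ℂ))).re -
    (1 / 2) * (‖q.2.2.2.1‖ ^ 2 + ‖q.2.2.2.2‖ ^ 2) *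
      ((r + q.1 * q.2.1) * q.2.1 + q.1 * q.2.2.1 * q.2.2.1)

lemma continuous_rescaledPoho (r : ℝ) : Continuous (rescaledPoho r) := by
  unfold rescaledPoho
  have := Complex.continuous_conj
  fun_prop

lemma poho_eq (a : ℂ) (φ : ℂ → ℂ) (ε θ : ℝ) (hε : 0 < ε) :
    ε * pohoIntegrand a φ (circleMap a ε θ) (Real.cos θ) (Real.sin θ) =
      rescaledPoho a.re (ε, Real.cos θ, Real.sin θ, (√ε : ℝ) * mg1 a φ (circleMap a ε θ),
        (√ε : ℝ) * mg2 a φ (circleMap a ε θ)) := by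
  have h1 : (circleMap a ε θ - proj a).re = a.re + ε * Real.cos θ := by
    simp [circleMap, proj, Complex.exp_mul_I, ← Complex.ofReal_cos, ← Complex.ofReal_sin]
  have h2 : (circleMap a ε θ - proj a).im = ε * Real.sin θ := by
    simp [circleMap, proj, Complex.exp_mul_I, ← Complex.ofReal_cos, ← Complex.ofReal_sin]
  have hS : ε = √ε ^ 2 := (Real.sq_sqrt hε.le).symm
  unfold pohoIntegrand rescaledPoho mgSq
  rw [h1, h2]
  generalize mg1 a φ (circleMap a ε θ) = M
  generalize mg2 a φ (circleMap a ε θ) = N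
  generalize √ε = s at *
  simp only [← Complex.normSq_eq_norm_sq, Complex.normSq_apply]
  simp
  rw [hS]
  ring

/-- For the model function the limit integrand is constant in `θ`: the two terms
`(r / 8) (c² + d²) cos θ` coming from the two parts of the Pohozaev integrand cancel. -/
lemma rescaledPoho_model (r c d θ : ℝ) :
    rescaledPoho r (0, Real.cos θ, Real.sin θ,
      Complex.I / 2 * ((c + d * Complex.I) / 2 * (Real.cos θ + Real.sin θ * Complex.I)
        + (c - d * Complex.I) / 2),
      1 / 2 * ((c + d * Complex.I) / 2 * (Real.cos θ + Real.sin θ * Complex.I)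
        - (c - d * Complex.I) / 2)) = r * (c ^ 2 - d ^ 2) / 8 := by
  have hCS := Real.cos_sq_add_sin_sq θ
  generalize Real.cos θ = C at *
  generalize Real.sin θ = S at *
  have hM : Complex.I / 2 * ((c + d * Complex.I) / 2 * (C + S * Complex.I)
        + (c - d * Complex.I) / 2)
      = (⟨-(c * S + d * C - d) / 4, (c * C - d * S + c) / 4⟩ : ℂ) := by
    apply Complex.ext <;> simp <;> ring
  have hN : 1 / 2 * ((c + d * Complex.I) / 2 * (C + S * Complex.I) - (c - d * Complex.I) / 2)
      = (⟨(c * C - d * S - c) / 4, (c * S + d * C + d) / 4⟩ : ℂ) := by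
    apply Complex.ext <;> simp <;> ring
  rw [hM, hN]
  unfold rescaledPoho
  simp only [← Complex.normSq_eq_norm_sq, Complex.normSq_apply]
  simp
  linear_combination (r * (c ^ 2 - d ^ 2) / 8) * hCS

/-- Existence and value of the Pohozaev remainder: under the standing hypotheses and
the vanishing expansion of order `1/2` at `a` with coefficients `c₁, d₁`, the limit
`M_a` of the boundary integrals over `∂D_ε(a)` as `ε → 0⁺` exists and equals
`(π a₁/4)(c₁² − d₁²)`. -/
theorem pohozaev_remainder_limit
    (a : ℂ) (ha : 0 < a.re)
    (lam r₀ : ℝ) (hlam : 0 < lam) (har₀ : a.re < r₀)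
    (p : ℂ → ℝ) (hp : ContDiff ℝ 1 p) (hppos : ∀ x, 0 < p x)
    (hpbdd : BddAbove (Set.range p))
    (hpgrad : ∃ Cg : ℝ, ∀ x, ‖fderiv ℝ p x‖ ≤ Cg)
    (hsmall : 2 * lam * sSup (Set.range p) * r₀ ^ 2 < 1)
    (φ : ℂ → ℂ)
    (hcont : ContinuousOn φ (closure (halfDisk (proj a) r₀)))
    (hbc : ∀ x ∈ closure (halfDisk (proj a) r₀), x.re = 0 → φ x = 0)
    (hC2 : ContDiffOn ℝ 2 φ (halfDisk (proj a) r₀ \ {a}))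
    (heq : ∀ x ∈ halfDisk (proj a) r₀ \ {a},
      magLap a φ x = ((lam * p x : ℝ) : ℂ) * φ x)
    (hint : IntegrableOn (mgSq a φ) (halfDisk (proj a) r₀))
    (c₁ d₁ : ℝ) (hcd : ¬(c₁ = 0 ∧ d₁ = 0))
    (hexp : (fun x => φ x - modelHalf a c₁ d₁ x) =o[nhdsWithin a {a}ᶜ]
      fun x => Real.sqrt ‖x - a‖)
    (hexp' : (fun x => fderiv ℝ φ x - fderiv ℝ (modelHalf a c₁ d₁) x)
      =o[nhdsWithin a {a}ᶜ] fun x => (Real.sqrt ‖x - a‖)⁻¹)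
    : Tendsto (pohoBdry a φ) (nhdsWithin 0 (Set.Ioi 0))
        (nhds (π * a.re / 4 * (c₁ ^ 2 - d₁ ^ 2))) := by
  set l := nhdsWithin (0 : ℝ) (Ioi 0) with hl
  -- The limits of the two components of the magnetic gradient rescaled by `√ε`.
  set m : ℝ → ℂ := fun θ => Complex.I / 2 *
    ((c₁ + d₁ * Complex.I) / 2 * (Real.cos θ + Real.sin θ * Complex.I)
      + (c₁ - d₁ * Complex.I) / 2) with hm
  set n : ℝ → ℂ := fun θ => 1 / 2 *
    ((c₁ + d₁ * Complex.I) / 2 * (Real.cos θ + Real.sin θ * Complex.I)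
      - (c₁ - d₁ * Complex.I) / 2) with hn
  have hpos : ∀ᶠ ε in l, 0 < ε := self_mem_nhdsWithin
  have hunif : ∀ δ > 0, ∀ᶠ ε in l, ∀ θ : ℝ,
      ‖(√ε : ℝ) * mg1 a φ (circleMap a ε θ) - m θ‖ ≤ δ ∧
      ‖(√ε : ℝ) * mg2 a φ (circleMap a ε θ) - n θ‖ ≤ δ := by
    intro δ hδ
    filter_upwards [hpos, eventually_circle (hexp.bound (half_pos hδ)),
      eventually_circle (hexp'.bound (half_pos hδ))] with ε hε h0 h1 θ
    obtain ⟨s, hs, rfl⟩ : ∃ s : ℝ, 0 < s ∧ ε = s ^ 2 :=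
      ⟨√ε, Real.sqrt_pos.2 hε, (Real.sq_sqrt hε.le).symm⟩
    rw [Real.sqrt_sq hs.le]
    have g0 := h0 θ
    have g1 := h1 θ
    rw [norm_inv, sqrt_circle_sub a s θ hs, Real.norm_of_nonneg hs.le] at g1
    rw [sqrt_circle_sub a s θ hs, Real.norm_of_nonneg hs.le] at g0
    have := mg_sub_le a c₁ d₁ s θ (δ / 2) hs φ g0 g1
    rw [mg1_model a c₁ d₁ s θ hs, mg2_model a c₁ d₁ s θ hs, mul_div_cancel₀ δ two_ne_zero] at this
    exact this
  have hper : ∃ K : ℝ, ∀ θ, ‖m θ‖ ≤ K ∧ ‖n θ‖ ≤ K := by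
    have hC : ∀ θ : ℝ, ‖(Real.cos θ + Real.sin θ * Complex.I : ℂ)‖ = 1 := by
      intro θ
      rw [Complex.ofReal_cos, Complex.ofReal_sin, ← Complex.exp_mul_I, Complex.norm_exp_ofReal_mul_I]
    refine ⟨‖(c₁ + d₁ * Complex.I : ℂ) / 2‖ + ‖(c₁ - d₁ * Complex.I : ℂ) / 2‖, fun θ => ⟨?_, ?_⟩⟩
    · have := norm_add_le ((c₁ + d₁ * Complex.I) / 2 * (Real.cos θ + Real.sin θ * Complex.I) : ℂ)
        ((c₁ - d₁ * Complex.I) / 2)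
      rw [norm_mul _ (Real.cos θ + Real.sin θ * Complex.I : ℂ), hC, mul_one] at this
      rw [hm, norm_mul]
      have h2 : ‖Complex.I / 2‖ = 1 / 2 := by simp
      rw [h2]
      linarith [norm_nonneg ((c₁ + d₁ * Complex.I) / 2 * (Real.cos θ + Real.sin θ * Complex.I)
        + (c₁ - d₁ * Complex.I) / 2 : ℂ)]
    · have := norm_sub_le ((c₁ + d₁ * Complex.I) / 2 * (Real.cos θ + Real.sin θ * Complex.I) : ℂ)
        ((c₁ - d₁ * Complex.I) / 2)
      rw [norm_mul _ (Real.cos θ + Real.sin θ * Complex.I : ℂ), hC, mul_one] at this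
      rw [hn, norm_mul]
      have h2 : ‖(1 / 2 : ℂ)‖ = 1 / 2 := by simp
      rw [h2]
      linarith [norm_nonneg ((c₁ + d₁ * Complex.I) / 2 * (Real.cos θ + Real.sin θ * Complex.I)
        - (c₁ - d₁ * Complex.I) / 2 : ℂ)]
  obtain ⟨K, hK⟩ := hper
  -- Small `ε` keep the arguments of the continuous function `rescaledPoho` in a compact set.
  obtain ⟨B, hB⟩ := (((isCompact_Icc (a := (0 : ℝ)) (b := 1)).prod
    ((isCompact_Icc (a := (-1 : ℝ)) (b := 1)).prod ((isCompact_Icc (a := (-1 : ℝ)) (b := 1)).prod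
      ((isCompact_closedBall (0 : ℂ) (K + 1)).prod
        (isCompact_closedBall (0 : ℂ) (K + 1))))))).exists_bound_of_continuousOn
          (continuous_rescaledPoho a.re).continuousOn
  have hmem : ∀ᶠ x in nhdsWithin a {a}ᶜ, x ∈ halfDisk (proj a) r₀ := by
    refine mem_nhdsWithin_of_mem_nhds (IsOpen.mem_nhds ?_ ?_)
    · exact (isOpen_lt (continuous_id.dist continuous_const) continuous_const).inter
        (isOpen_lt continuous_const Complex.continuous_re)
    · have h1 : a - proj a = (a.re : ℂ) := by
        apply Complex.ext <;> simp [proj]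
      refine ⟨?_, ha⟩
      rw [dist_eq_norm, h1, Complex.norm_real, Real.norm_of_nonneg ha.le]
      exact har₀
  have hlim : Tendsto (pohoBdry a φ) l
      (nhds (∫ _ in Ioc 0 (2 * π), a.re * (c₁ ^ 2 - d₁ ^ 2) / 8)) := by
    unfold pohoBdry
    refine tendsto_integral_filter_of_dominated_convergence (fun _ => B) ?_ ?_ ?_ ?_
    · filter_upwards [eventually_circle hmem, hpos] with ε hε hε0
      have hφ : Measurable fun θ => φ (circleMap a ε θ) :=
        (hcont.comp_continuous (continuous_circleMap a ε)
          fun θ => subset_closure (hε θ)).measurable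
      have hc : Measurable (circleMap a ε) := (continuous_circleMap a ε).measurable
      have hA : Measurable (abPot a) := by unfold abPot; fun_prop
      have hd : ∀ h : ℂ, Measurable fun θ => fderiv ℝ φ (circleMap a ε θ) h := fun h =>
        (measurable_fderiv_apply_const ℝ φ h).comp hc
      have hM : Measurable fun θ => mg1 a φ (circleMap a ε θ) :=
        ((hd 1).const_mul _).add
          ((Complex.measurable_ofReal.comp (Complex.measurable_re.comp (hA.comp hc))).mul hφ)
      have hN : Measurable fun θ => mg2 a φ (circleMap a ε θ) :=
        ((hd Complex.I).const_mul _).add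
          ((Complex.measurable_ofReal.comp (Complex.measurable_im.comp (hA.comp hc))).mul hφ)
      simp_rw [poho_eq a φ ε _ hε0]
      exact ((continuous_rescaledPoho a.re).measurable.comp
        (measurable_const.prodMk (Real.measurable_cos.prodMk (Real.measurable_sin.prodMk
          ((hM.const_mul _).prodMk (hN.const_mul _)))))).aestronglyMeasurable
    · filter_upwards [hunif 1 one_pos, hpos, Ioo_mem_nhdsGT one_pos] with ε h1 hε hε1
      refine ae_of_all _ fun θ => ?_
      rw [poho_eq a φ ε θ hε]
      refine hB _ ⟨⟨hε.le, hε1.2.le⟩, ⟨Real.neg_one_le_cos θ, Real.cos_le_one θ⟩,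
        ⟨Real.neg_one_le_sin θ, Real.sin_le_one θ⟩, ?_, ?_⟩
      · rw [mem_closedBall_zero_iff]
        have := norm_le_norm_add_norm_sub' ((√ε : ℝ) * mg1 a φ (circleMap a ε θ)) (m θ)
        linarith [(h1 θ).1, (hK θ).1]
      · rw [mem_closedBall_zero_iff]
        have := norm_le_norm_add_norm_sub' ((√ε : ℝ) * mg2 a φ (circleMap a ε θ)) (n θ)
        linarith [(h1 θ).2, (hK θ).2]
    · exact integrable_const _
    · refine ae_of_all _ fun θ => ?_
      have t1 : Tendsto (fun ε : ℝ => ((√ε : ℝ) : ℂ) * mg1 a φ (circleMap a ε θ)) l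
          (nhds (m θ)) := by
        rw [Metric.tendsto_nhds]
        intro δ hδ
        filter_upwards [hunif (δ / 2) (half_pos hδ)] with ε h
        rw [dist_eq_norm]
        linarith [(h θ).1]
      have t2 : Tendsto (fun ε : ℝ => ((√ε : ℝ) : ℂ) * mg2 a φ (circleMap a ε θ)) l
          (nhds (n θ)) := by
        rw [Metric.tendsto_nhds]
        intro δ hδ
        filter_upwards [hunif (δ / 2) (half_pos hδ)] with ε h
        rw [dist_eq_norm]
        linarith [(h θ).2]
      have t0 : Tendsto (fun ε : ℝ => ε) l (nhds 0) := tendsto_id.mono_left nhdsWithin_le_nhds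
      have t := ((continuous_rescaledPoho a.re).tendsto _).comp
        (t0.prodMk_nhds ((tendsto_const_nhds (x := Real.cos θ)).prodMk_nhds
          ((tendsto_const_nhds (x := Real.sin θ)).prodMk_nhds (t1.prodMk_nhds t2))))
      rw [rescaledPoho_model] at t
      refine t.congr' ?_
      filter_upwards [hpos] with ε hε
      exact (poho_eq a φ ε θ hε).symm
  convert hlim using 2
  rw [setIntegral_const]
  simp [Real.pi_pos.le]
  ring

end
end
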